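/- For every η > 0 there exist κ > 0 and a constant C = C(η) such that the following holds. For every prime p, every non-trivial multiplicative character χ modulo p, and all real numbers U, V with p^{1/4 + η} < U, V ≤ p, one has |∑_{1 ≤ u ≤ U} ∑_{1 ≤ v ≤ V} τ(u)·τ(v)·χ(u − v)| ≤ C·U·V·p^{−κ}, where τ(n) denotes the number of positive divisors of n. -/

import Mathlib

open Finset

/-!
Opening `τ(u) = ∑_{a b = u} 1` by Dirichlet's hyperbola method, with the smaller divisor `a` in a
dyadic range `[A, 2A)`, reduces the problem to a saving in `∑_a ∑_v |∑_b χ(a b - v)|`, because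
`τ(v) ≪ p ^ ε`. Cut the ranges of `b` and `v` into blocks of lengths `B` and `L`. Following Burgess,
replace `b` by `b + h k`: since `χ(a b - v + a h k) = χ(a h) χ(w + k)` with `w = (a b - v) / (a h)`,
everything depends on how often a residue `w` is represented, and the second moment of this
representation count is controlled by the divisor bound as soon as `A B` and `B L` exceed
`p ^ (1/4 + δ)`. Hölder's inequality then leaves the `2r`-th moment over `w` of `∑_k χ(w + k)`,
which is bounded by Weil's estimate for `∑_x χ(f x)`.

Weil's estimate itself comes from Stepanov's method: an auxiliary polynomial vanishing to high order
where `χ (f x)` takes a given value bounds the sums over `F_{q^n}`, for every `n`, up to a constant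
multiple of `q ^ (n/2)`. These sums are, up to sign, the power sums of the inverse roots of a
polynomial `L`-function, so each inverse root has absolute value at most `√q`.
-/

section Stepanov

open Polynomial

theorem exists_ne_zero_forall_linearMap_apply_eq_zero {F V W ι : Type*} [Field F]
    [AddCommGroup V] [Module F V] [FiniteDimensional F V] [AddCommGroup W] [Module F W] [Fintype ι]
    (S : Submodule F W) [FiniteDimensional F S] (T : ι → V →ₗ[F] W) (hT : ∀ i v, T i v ∈ S)
    (hcard : Fintype.card ι * Module.finrank F S < Module.finrank F V) :
    ∃ v ≠ 0, ∀ i, T i v = 0 := by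
  let T' : V →ₗ[F] ι → S := LinearMap.pi fun i ↦ (T i).codRestrict S (hT i)
  have hker : LinearMap.ker T' ≠ ⊥ := by
    apply LinearMap.ker_ne_bot_of_finrank_lt
    simpa [Module.finrank_pi_fintype] using hcard
  obtain ⟨v, hv, hv0⟩ := (Submodule.ne_bot_iff _).1 hker
  exact ⟨v, hv0, fun i ↦ congrArg Subtype.val (congrFun (LinearMap.mem_ker.1 hv) i)⟩

theorem finrank_degreeLT (F : Type*) [Field F] (n : ℕ) :
    Module.finrank F (degreeLT F n) = n := by
  rw [(degreeLTEquiv F n).finrank_eq, Module.finrank_fin_fun]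

theorem pow_sub_dvd_hasseDeriv_pow {R : Type*} [CommRing R] (f : R[X]) (N : ℕ) :
    ∀ l, f ^ (N - l) ∣ hasseDeriv l (f ^ N) := by
  induction N with
  | zero => simp
  | succ N ih =>
    intro l
    rw [pow_succ f N, hasseDeriv_mul]
    refine dvd_sum fun ⟨i, j⟩ hij ↦ ?_
    rw [HasAntidiagonal.mem_antidiagonal] at hij
    dsimp only at hij ⊢
    rcases Nat.eq_zero_or_pos j with rfl | hj
    · obtain rfl : i = l := by omega
      rw [hasseDeriv_zero']
      refine (pow_dvd_pow f (show N + 1 - i ≤ N - i + 1 by omega)).trans ?_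
      rw [pow_succ]
      exact mul_dvd_mul_right (ih i) f
    · exact ((pow_dvd_pow f (by omega)).trans (ih i)).mul_right _

theorem X_sub_C_pow_dvd_iff_taylor_coeff {R : Type*} [CommRing R] {x : R} {h : R[X]} {M : ℕ} :
    (X - C x) ^ M ∣ h ↔ ∀ l < M, (taylor x h).coeff l = 0 := by
  rw [X_sub_C_pow_dvd_iff, X_pow_dvd_iff, taylor_apply]

section Domain

variable {R : Type*} [CommRing R] [IsDomain R] {f : R[X]}

theorem exists_hasseDeriv_pow_eq_pow_mul (hf : f ≠ 0) (N l : ℕ) :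
    ∃ G : R[X], hasseDeriv l (f ^ N) = f ^ (N - l) * G ∧ G.natDegree ≤ l * f.natDegree := by
  obtain ⟨G, hG⟩ := pow_sub_dvd_hasseDeriv_pow f N l
  refine ⟨G, hG, ?_⟩
  rcases eq_or_ne G 0 with rfl | hG0
  · simp
  have hdeg := natDegree_hasseDeriv_le (f ^ N) l
  rw [hG, natDegree_mul (pow_ne_zero _ hf) hG0, natDegree_pow, natDegree_pow] at hdeg
  have hN : N * f.natDegree ≤ (N - l) * f.natDegree + l * f.natDegree := by
    rw [← add_mul]
    exact Nat.mul_le_mul_right _ (by omega)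
  omega

theorem exists_linearMap_hasseDeriv_mul_pow_eq (hf : f ≠ 0) {N l : ℕ} (hl : l ≤ N) :
    ∃ Q : R[X] →ₗ[R] R[X], ∀ k, hasseDeriv l (k * f ^ N) = f ^ (N - l) * Q k ∧
      (Q k).natDegree ≤ k.natDegree + l * f.natDegree := by
  choose G hG hGdeg using exists_hasseDeriv_pow_eq_pow_mul hf N
  refine ⟨∑ ij ∈ antidiagonal l,
    LinearMap.mulRight R (f ^ (l - ij.2) * G ij.2) ∘ₗ hasseDeriv ij.1, fun k ↦ ⟨?_, ?_⟩⟩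
  · rw [hasseDeriv_mul, LinearMap.sum_apply, mul_sum]
    refine sum_congr rfl fun ij hij ↦ ?_
    rw [HasAntidiagonal.mem_antidiagonal] at hij
    simp only [LinearMap.comp_apply, LinearMap.mulRight_apply]
    rw [hG, show N - ij.2 = (N - l) + (l - ij.2) by omega, pow_add]
    ring
  · rw [LinearMap.sum_apply]
    refine natDegree_sum_le_of_forall_le _ _ fun ij hij ↦ ?_
    rw [HasAntidiagonal.mem_antidiagonal] at hij
    simp only [LinearMap.comp_apply, LinearMap.mulRight_apply]
    have hk := natDegree_hasseDeriv_le k ij.1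
    have hfG : (f ^ (l - ij.2) * G ij.2).natDegree ≤ l * f.natDegree := by
      refine (natDegree_mul_le.trans (add_le_add natDegree_pow_le (hGdeg _))).trans ?_
      rw [← add_mul, show l - ij.2 + ij.2 = l by omega]
    exact natDegree_mul_le.trans (by omega)

end Domain

variable {F : Type*} [Field F]

theorem card_mul_le_natDegree_of_X_sub_C_pow_dvd {h : F[X]} (hh : h ≠ 0) {s : Finset F} {M : ℕ}
    (hs : ∀ x ∈ s, (X - C x) ^ M ∣ h) : #s * M ≤ h.natDegree := by
  classical
  have hprod : ∏ x ∈ s, (X - C x) ^ M ∣ h := prod_dvd_of_coprime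
    (fun _ _ _ _ hxy ↦ (pairwise_coprime_X_sub_C Function.injective_id hxy).pow) hs
  have hdeg := natDegree_le_of_dvd hprod hh
  rwa [natDegree_prod_of_monic _ _ fun x _ ↦ (monic_X_sub_C x).pow M, sum_congr rfl fun x _ ↦
    (by rw [natDegree_pow, natDegree_X_sub_C, mul_one] : natDegree ((X - C x) ^ M) = M),
    sum_const, smul_eq_mul] at hdeg

/-- Stepanov's auxiliary polynomial `∑ k_{i,j} f ^ (M + i e) X ^ (q j)` over `i < d`, `j < J`, where
`q = d e + 1`. The pair `(i, j)` is encoded as `n = i + d j`, which orders the terms by their order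
of vanishing at a simple zero `0` of `f`. -/
noncomputable def stepanovPoly (f : F[X]) (d e M J : ℕ) (k : ℕ → F[X]) : F[X] :=
  ∑ n ∈ range (d * J), k n * f ^ (M + n % d * e) * X ^ ((d * e + 1) * (n / d))

theorem stepanovPoly_ne_zero {f : F[X]} (hf0 : f.coeff 0 = 0) (hf1 : f.coeff 1 ≠ 0)
    {d e M J K : ℕ} (hKJ : K + J ≤ e) {k : ℕ → F[X]} (hk : ∀ n, (k n).degree < K)
    (hk0 : ∃ n < d * J, k n ≠ 0) : stepanovPoly f d e M J k ≠ 0 := by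
  intro hzero
  obtain ⟨g, rfl⟩ := X_dvd_iff.2 hf0
  rw [coeff_X_mul] at hf1
  have hterm (n : ℕ) : k n * (X * g) ^ (M + n % d * e) * X ^ ((d * e + 1) * (n / d)) =
      X ^ (M + n * e + n / d) * (k n * g ^ (M + n % d * e)) := by
    have hexp : M + n * e + n / d = (M + n % d * e) + (d * e + 1) * (n / d) := by
      nth_rw 1 [← Nat.mod_add_div n d]
      ring
    rw [hexp, mul_pow, pow_add X _ ((d * e + 1) * (n / d))]
    ring
  classical
  obtain ⟨n, ⟨hn, hkn⟩, hmin⟩ : ∃ n, (n < d * J ∧ k n ≠ 0) ∧ ∀ n' < n, ¬(n' < d * J ∧ k n' ≠ 0) :=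
    ⟨_, Nat.find_spec hk0, fun _ ↦ Nat.find_min hk0⟩
  have hlt : n / d < J := Nat.div_lt_of_lt_mul hn
  have hdvd : (X : F[X]) ^ (M + (n + 1) * e) ∣
      X ^ (M + n * e + n / d) * (k n * g ^ (M + n % d * e)) := by
    rw [stepanovPoly, ← add_sum_erase _ _ (mem_range.2 hn)] at hzero
    rw [← hterm n, eq_neg_of_add_eq_zero_left hzero, dvd_neg]
    refine dvd_sum fun n' hn' ↦ ?_
    rw [mem_erase, mem_range] at hn'
    rcases lt_or_gt_of_ne hn'.1 with h | h
    · have hkn' : k n' = 0 := by_contra fun hne ↦ hmin n' h ⟨hn'.2, hne⟩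
      simp [hkn']
    · rw [hterm]
      have hmul : (n + 1) * e ≤ n' * e := Nat.mul_le_mul_right _ h
      exact (pow_dvd_pow _ (by lia)).mul_right _
  rw [show M + (n + 1) * e = (M + n * e + n / d) + (e - n / d) by rw [add_one_mul]; omega, pow_add,
    mul_dvd_mul_iff_left (pow_ne_zero _ X_ne_zero)] at hdvd
  have hcop : IsCoprime ((X : F[X]) ^ (e - n / d)) (g ^ (M + n % d * e)) :=
    IsCoprime.pow (by rwa [irreducible_X.coprime_iff_not_dvd, X_dvd_iff])
  refine hkn (eq_zero_of_dvd_of_degree_lt (hcop.dvd_of_dvd_mul_right hdvd) ?_)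
  rw [degree_X_pow]
  exact (hk n).trans_le (by exact_mod_cast (by omega : K ≤ e - n / d))

theorem natDegree_stepanovPoly_le (f : F[X]) {d e M J K : ℕ} (hd : 0 < d) {k : ℕ → F[X]}
    (hk : ∀ n, (k n).degree < K) :
    (stepanovPoly f d e M J k).natDegree ≤
      K + (M + d * e) * f.natDegree + J * (d * e + 1) := by
  refine natDegree_sum_le_of_forall_le _ _ fun n hn ↦ ?_
  have hJ : n / d ≤ J := (Nat.div_lt_of_lt_mul (mem_range.1 hn)).le
  refine natDegree_mul_le.trans (add_le_add (natDegree_mul_le.trans (add_le_add ?_ ?_)) ?_)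
  · exact natDegree_le_iff_degree_le.2 (hk n).le
  · refine natDegree_pow_le.trans (Nat.mul_le_mul_right _ ?_)
    gcongr
    exact (Nat.mod_lt _ hd).le
  · rw [natDegree_X_pow, mul_comm]
    exact Nat.mul_le_mul_right _ hJ

variable [Fintype F]

theorem coeff_taylor_mul_X_pow_card_mul (h : F[X]) (x : F) (j : ℕ) {l : ℕ}
    (hl : l < Fintype.card F) :
    (taylor x (h * X ^ (Fintype.card F * j))).coeff l = x ^ j * (hasseDeriv l h).eval x := by
  have hX : taylor x (X ^ (Fintype.card F * j)) = (X ^ Fintype.card F + C x) ^ j := by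
    rw [taylor_X_pow, pow_mul, ← FiniteField.expand_card, map_add, expand_X, expand_C]
  obtain ⟨s, hs⟩ : (X : F[X]) ^ Fintype.card F ∣
      (X ^ Fintype.card F + C x) ^ j - C x ^ j := by
    have := sub_dvd_pow_sub_pow (X ^ Fintype.card F + C x) (C x : F[X]) j
    rwa [add_sub_cancel_right] at this
  rw [taylor_mul, hX, eq_add_of_sub_eq hs, mul_add, coeff_add, ← C_pow, coeff_mul_C, taylor_coeff,
    mul_left_comm, coeff_X_pow_mul', if_neg hl.not_ge, zero_add, mul_comm]

/-- The linear conditions `∑ X ^ j c ^ i Q_{i,l}(k_{i,j}) = 0`, whose left sides have small degree,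
make every point with `f(x) ^ e = c` a zero of order `M`, since `x ^ q = x` there. -/
theorem exists_stepanovPoly_vanishing {f : F[X]} (hf : f ≠ 0) {d e M J K : ℕ}
    (hq : Fintype.card F = d * e + 1) (hM : M ≤ Fintype.card F)
    (hcount : M * (K + M * f.natDegree + J) < d * J * K) (c : F) :
    ∃ k : ℕ → F[X], (∃ n < d * J, k n ≠ 0) ∧ (∀ n, (k n).degree < K) ∧
      ∀ x, f.eval x ^ e = c → (X - C x) ^ M ∣ stepanovPoly f d e M J k := by
  choose Q hQ hQdeg using fun (n : ℕ) (l : Fin M) ↦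
    exists_linearMap_hasseDeriv_mul_pow_eq hf (show (l : ℕ) ≤ M + n % d * e by omega)
  let S (l : Fin M) : (Fin (d * J) → degreeLT F K) →ₗ[F] F[X] := ∑ n : Fin (d * J),
    LinearMap.mulLeft F (X ^ (n / d : ℕ) * C (c ^ (n % d : ℕ))) ∘ₗ Q n l ∘ₗ
      (degreeLT F K).subtype ∘ₗ LinearMap.proj n
  have hS l a : S l a = ∑ n : Fin (d * J), X ^ (n / d : ℕ) * C (c ^ (n % d : ℕ)) * Q n l (a n) := by
    simp [S, mul_assoc]
  have hSdeg l a : S l a ∈ degreeLT F (K + M * f.natDegree + J) := by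
    rw [hS]
    refine Submodule.sum_mem _ fun n _ ↦ mem_degreeLT.2 ?_
    have ha : (a n : F[X]).natDegree ≤ K :=
      natDegree_le_iff_degree_le.2 (mem_degreeLT.1 (a n).2).le
    have hXC : (X ^ (n / d : ℕ) * C (c ^ (n % d : ℕ))).natDegree ≤ n / d :=
      (natDegree_mul_C_le _ _).trans (natDegree_X_pow_le _)
    have hJ : (n / d : ℕ) < J := Nat.div_lt_of_lt_mul n.2
    have hl : (l : ℕ) * f.natDegree ≤ M * f.natDegree := Nat.mul_le_mul_right _ l.2.le
    have hnat := natDegree_mul_le.trans (add_le_add hXC (hQdeg n l (a n)))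
    exact degree_le_natDegree.trans_lt (by exact_mod_cast (by omega))
  obtain ⟨a, ha0, ha⟩ := exists_ne_zero_forall_linearMap_apply_eq_zero _ S hSdeg (by
    simpa [Module.finrank_pi_fintype, finrank_degreeLT] using hcount)
  let k (n : ℕ) : F[X] := if h : n < d * J then a ⟨n, h⟩ else 0
  have hk (n : Fin (d * J)) : k n = a n := by simp [k]
  refine ⟨k, ?_, fun n ↦ ?_, fun x hx ↦ ?_⟩
  · obtain ⟨n, hn⟩ := Function.ne_iff.1 ha0
    exact ⟨n, n.2, by simpa [hk] using hn⟩
  · by_cases h : n < d * J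
    · simpa [k, h] using mem_degreeLT.1 (a ⟨n, h⟩).2
    · simp [k, h]
  rw [X_sub_C_pow_dvd_iff_taylor_coeff]
  intro l hl
  have hterm (n : ℕ) : (taylor x (k n * f ^ (M + n % d * e) *
      X ^ (Fintype.card F * (n / d)))).coeff l = f.eval x ^ (M - l) *
        (X ^ (n / d) * C (c ^ (n % d)) * Q n ⟨l, hl⟩ (k n)).eval x := by
    rw [coeff_taylor_mul_X_pow_card_mul _ _ _ (hl.trans_le hM), (hQ n ⟨l, hl⟩ (k n)),
      show M + n % d * e - l = (M - l) + e * (n % d) by rw [mul_comm e]; omega]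
    simp only [eval_mul, eval_pow, eval_X, eval_C, pow_add, pow_mul, hx]
    ring
  rw [stepanovPoly, ← hq, map_sum, finsetSum_coeff, sum_congr rfl fun n _ ↦ hterm n, ← mul_sum,
    ← eval_finsetSum, Finset.sum_range]
  simp only [hk]
  rw [← hS ⟨l, hl⟩, ha, eval_zero, mul_zero]

variable [DecidableEq F]

theorem mul_card_filter_eval_pow_eq_le {f : F[X]} (hf0 : f.coeff 0 = 0) (hf1 : f.coeff 1 ≠ 0)
    {d e M J K : ℕ} (hq : Fintype.card F = d * e + 1) (hM : M ≤ Fintype.card F) (hKJ : K + J ≤ e)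
    (hcount : M * (K + M * f.natDegree + J) < d * J * K) (c : F) :
    M * #{x | f.eval x ^ e = c} ≤ K + (M + d * e) * f.natDegree + J * Fintype.card F := by
  have hf : f ≠ 0 := by rintro rfl; simp at hf1
  have hd : 0 < d := by
    rw [mul_assoc] at hcount
    exact pos_of_mul_pos_left (hcount.trans_le' (Nat.zero_le _)) (Nat.zero_le _)
  obtain ⟨k, hk0, hk, hdvd⟩ := exists_stepanovPoly_vanishing hf hq hM hcount c
  rw [mul_comm, hq]
  exact (card_mul_le_natDegree_of_X_sub_C_pow_dvd (stepanovPoly_ne_zero hf0 hf1 hKJ hk hk0)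
    fun x hx ↦ hdvd x (mem_filter.1 hx).2).trans (natDegree_stepanovPoly_le f hd hk)

/-- The amount by which the order of vanishing in Stepanov's method falls short of `d √q`, for a
polynomial of degree `m`. -/
def stepanovGap (d m : ℕ) : ℕ := 4 * d ^ 2 * (d * m + 1) + 1

/-- The constant in Stepanov's bound for a polynomial of degree `m`. -/
def stepanovConst (d m : ℕ) : ℕ :=
  4 * (stepanovGap d m + 1 + 2 * m) + 4 * d * (stepanovGap d m + 4 * d + 4)

theorem exists_stepanov_parameters {d e s m : ℕ} (hd : 0 < d) (hs : s * s ≤ d * e + 1)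
    (hs' : d * e + 1 ≤ 4 * (s * s)) (hlarge : stepanovGap d m + 4 * d + 4 ≤ s) :
    ∃ M K, d * s = M + stepanovGap d m ∧ M ≤ d * e + 1 ∧ K + s ≤ e ∧
      M * (K + M * m + s) < d * s * K := by
  set t := stepanovGap d m with ht
  have hse : s ≤ e := by
    by_contra! h
    have : d * e ≤ d * s := Nat.mul_le_mul_left _ h.le
    nlinarith
  obtain ⟨K, rfl⟩ : ∃ K, e = K + s := ⟨e - s, by omega⟩
  obtain ⟨M, hM⟩ : ∃ M, d * s = M + t := by
    simpa only [add_comm] using Nat.exists_eq_add_of_le (show t ≤ d * s by nlinarith)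
  have hK : s * s ≤ 2 * d * K := by
    have : (4 * d + 4) * s ≤ s * s := Nat.mul_le_mul_right _ (by omega)
    nlinarith
  have hKpos : 0 < K := by
    rcases Nat.eq_zero_or_pos K with rfl | h
    · nlinarith
    · exact h
  refine ⟨M, K, hM, by nlinarith, le_rfl, ?_⟩
  have hMle : M ≤ d * s := by omega
  have hlow : M * (M * m + s) < t * K := calc
    M * (M * m + s) ≤ (d * s) * ((d * s) * m + s) := by gcongr
    _ = d * (d * m + 1) * (s * s) := by ring
    _ ≤ d * (d * m + 1) * (2 * d * K) := Nat.mul_le_mul_left _ hK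
    _ = 2 * d ^ 2 * (d * m + 1) * K := by ring
    _ < t * K := Nat.mul_lt_mul_of_pos_right (by rw [ht, stepanovGap]; lia) hKpos
  calc M * (K + M * m + s) = M * K + M * (M * m + s) := by ring
    _ < M * K + t * K := by gcongr
    _ = d * s * K := by rw [hM]; ring

theorem mul_card_filter_eval_pow_eq_le_of_coeff {f : F[X]} (hf0 : f.coeff 0 = 0)
    (hf1 : f.coeff 1 ≠ 0) {d e : ℕ} (hq : Fintype.card F = d * e + 1) (c : F) :
    d * #{x | f.eval x ^ e = c} ≤
      Fintype.card F + stepanovConst d f.natDegree * Nat.sqrt (Fintype.card F) := by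
  set m := f.natDegree
  set t := stepanovGap d m with ht
  set q := Fintype.card F
  set s := Nat.sqrt q
  set Z := #{x | f.eval x ^ e = c}
  have hZ : Z ≤ q := card_le_univ _
  have hq1 : 1 < q := Fintype.one_lt_card
  have hd : 0 < d := by
    rcases Nat.eq_zero_or_pos d with rfl | h
    · lia
    · exact h
  have hs : s * s ≤ q := Nat.sqrt_le q
  have hs1 : 1 ≤ s := Nat.sqrt_pos.2 hq1.le
  have hs4 : q ≤ 4 * (s * s) := by
    have : q < (s + 1) * (s + 1) := Nat.lt_succ_sqrt q
    nlinarith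
  rw [stepanovConst, ← ht]
  rcases lt_or_ge s (t + 4 * d + 4) with hsmall | hlarge
  · calc d * Z ≤ d * (4 * (s * s)) := by gcongr; exact hZ.trans hs4
      _ = 4 * d * s * s := by ring
      _ ≤ 4 * d * (t + 4 * d + 4) * s := by gcongr
      _ ≤ _ := by nlinarith
  obtain ⟨M, K, hM, hMq, hKs, hcount⟩ :=
    exists_stepanov_parameters hd (hq ▸ hs) (hq ▸ hs4) hlarge
  have hMZ : M * Z ≤ K + (M + d * e) * m + s * q :=
    mul_card_filter_eval_pow_eq_le hf0 hf1 hq (hMq.trans_eq hq.symm) hKs hcount c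
  have hKq : K ≤ q := by nlinarith
  refine Nat.le_of_mul_le_mul_left ?_ hs1
  calc s * (d * Z) = M * Z + t * Z := by rw [← add_mul, ← hM]; ring
    _ ≤ (q + (q + q) * m + s * q) + t * q := by
      gcongr
      refine hMZ.trans ?_
      gcongr <;> lia
    _ = s * q + (t + 1 + 2 * m) * q := by ring
    _ ≤ s * q + (t + 1 + 2 * m) * (4 * (s * s)) := by gcongr
    _ ≤ s * (q + (4 * (t + 1 + 2 * m) + 4 * d * (t + 4 * d + 4)) * s) := by
      nlinarith [Nat.zero_le (4 * d * (t + 4 * d + 4) * (s * s))]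

/-- The constant depends only on `d` and `deg f`, so that it is uniform over extensions of the
field of definition of `f`. -/
theorem stepanov_bound {f : F[X]} {a : F} (hfa : f.IsRoot a) (hfa' : ¬f.derivative.IsRoot a)
    {d e : ℕ} (hq : Fintype.card F = d * e + 1) (c : F) :
    d * #{x | f.eval x ^ e = c} ≤
      Fintype.card F + stepanovConst d f.natDegree * Nat.sqrt (Fintype.card F) := by
  have hcard : #{x | f.eval x ^ e = c} = #{x | (taylor a f).eval x ^ e = c} :=
    card_equiv (Equiv.addRight (-a)) (by simp [taylor_eval])
  rw [hcard, ← natDegree_taylor f a]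
  exact mul_card_filter_eval_pow_eq_le_of_coeff (by rwa [taylor_coeff_zero])
    (by rwa [taylor_coeff_one]) hq c

end Stepanov

section PowerSums

open Filter Topology

theorem frequently_forall_half_norm_pow_le_re {ι : Type*} [Finite ι] (w : ι → ℂ) :
    ∃ᶠ n in atTop, ∀ i, ‖w i‖ ^ n / 2 ≤ (w i ^ n).re := by
  let z : ι → Circle := fun i ↦ Circle.exp (w i).arg
  have hw (i n) : (w i ^ n).re = ‖w i‖ ^ n * ((z i : ℂ) ^ n).re := by
    rw [← Complex.re_ofReal_mul, Complex.ofReal_pow, ← mul_pow, Circle.coe_exp,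
      Complex.norm_mul_exp_arg_mul_I]
  have hopen : IsOpen {u : ι → Circle | ∀ i, 1 / 2 < (u i : ℂ).re} := by
    simp only [Set.ofPred_forall]
    exact isOpen_iInter_of_finite fun i ↦ isOpen_lt continuous_const (by fun_prop)
  refine ((mapClusterPt_one_atTop_pow z).frequently
    (hopen.mem_nhds (by norm_num : ∀ i, 1 / 2 < (((1 : ι → Circle) i : Circle) : ℂ).re))).mono
    fun n hn i ↦ ?_
  have hni : 1 / 2 < ((z i : ℂ) ^ n).re := by simpa using hn i
  rw [hw]
  nlinarith [pow_nonneg (norm_nonneg (w i)) n]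

theorem norm_le_of_norm_sum_pow_le {ι : Type*} [Fintype ι] {w : ι → ℂ} {B R : ℝ} (hR : 0 < R)
    (h : ∀ n : ℕ, 1 ≤ n → ‖∑ i, w i ^ n‖ ≤ B * R ^ n) (i : ι) : ‖w i‖ ≤ R := by
  by_contra! hlt
  have hlarge : ∀ᶠ n in atTop, 2 * B < (‖w i‖ / R) ^ n :=
    (tendsto_pow_atTop_atTop_of_one_lt ((one_lt_div hR).2 hlt)).eventually_gt_atTop _
  obtain ⟨n, hre, hB, hn⟩ := ((frequently_forall_half_norm_pow_le_re w).and_eventually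
    (hlarge.and (eventually_ge_atTop 1))).exists
  rw [div_pow, lt_div_iff₀ (pow_pos hR n)] at hB
  have hsum : ‖w i‖ ^ n / 2 ≤ B * R ^ n := calc
    ‖w i‖ ^ n / 2 ≤ (w i ^ n).re := hre i
    _ ≤ ∑ j, (w j ^ n).re := single_le_sum (f := fun j ↦ (w j ^ n).re)
      (fun j _ ↦ (by positivity : 0 ≤ ‖w j‖ ^ n / 2).trans (hre j)) (mem_univ i)
    _ = (∑ j, w j ^ n).re := (Complex.re_sum _ _).symm
    _ ≤ B * R ^ n := (Complex.re_le_norm _).trans (h n hn)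
  linarith

theorem exists_fin_univ_val_map_eq {α : Type*} {N : ℕ} (s : Multiset α) (hs : s.card = N) :
    ∃ w : Fin N → α, univ.val.map w = s := by
  obtain rfl : s.toList.length = N := by rw [Multiset.length_toList, hs]
  exact ⟨s.toList.get, by rw [Fin.univ_val_map, List.ofFn_get, Multiset.coe_toList]⟩

open MvPolynomial in
theorem exists_aeval_esymm_eq {k : Type*} [Field k] [IsAlgClosed k] {a : ℕ → k} {N : ℕ}
    (ha0 : a 0 = 1) (haN : ∀ n, N < n → a n = 0) :
    ∃ w : Fin N → k, ∀ n, a n = (-1) ^ n * aeval w (esymm (Fin N) k n) := by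
  let P : Polynomial k := ∑ i ∈ range (N + 1), Polynomial.C (a i) * Polynomial.X ^ (N - i)
  have hcoeff : ∀ j ≤ N, P.coeff j = a (N - j) := by
    intro j hj
    simp only [P, Polynomial.finsetSum_coeff, Polynomial.coeff_C_mul_X_pow]
    rw [sum_eq_single_of_mem (N - j) (mem_range.2 (by omega)), if_pos (by omega)]
    intro b hb hne
    rw [mem_range] at hb
    rw [if_neg (by omega)]
  have hdeg : P.natDegree = N := by
    refine le_antisymm (Polynomial.natDegree_sum_le_of_forall_le _ _ fun i _ ↦ ?_)
      (Polynomial.le_natDegree_of_ne_zero (by simp [hcoeff N le_rfl, ha0]))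
    exact (Polynomial.natDegree_C_mul_X_pow_le _ _).trans (by omega)
  have hlead : P.leadingCoeff = 1 := by
    rw [Polynomial.leadingCoeff, hdeg, hcoeff N le_rfl, Nat.sub_self, ha0]
  have hcard : P.roots.card = P.natDegree :=
    Polynomial.splits_iff_card_roots.1 (IsAlgClosed.splits P)
  obtain ⟨w, hw⟩ := exists_fin_univ_val_map_eq P.roots (hcard.trans hdeg)
  refine ⟨w, fun n ↦ ?_⟩
  rw [aeval_esymm_eq_multiset_esymm, hw]
  rcases le_or_gt n N with h | h
  · have hvieta := Polynomial.coeff_eq_esymm_roots_of_card hcard (k := N - n) (by omega)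
    rwa [hcoeff _ (by omega), hlead, hdeg, Nat.sub_sub_self h, one_mul] at hvieta
  · rw [haN n h, Multiset.esymm, Multiset.powersetCard_eq_empty _ (by omega)]
    simp

open MvPolynomial in
theorem mul_aeval_esymm_eq_sum {k ι : Type*} [CommRing k] [Fintype ι] (w : ι → k) (n : ℕ) :
    n * ((-1) ^ n * aeval w (esymm ι k n)) =
      ∑ j ∈ Icc 1 n, -(∑ i, w i ^ j) * ((-1) ^ (n - j) * aeval w (esymm ι k (n - j))) := by
  classical
  have hnewton := congrArg (aeval w) (mul_esymm_eq_sum ι k n)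
  simp only [map_mul, map_sum, map_natCast, map_pow, map_neg, map_one] at hnewton
  rw [mul_left_comm, hnewton, ← mul_assoc, ← pow_add, ← add_assoc, ← two_mul, pow_succ, pow_mul,
    neg_one_sq, one_pow, one_mul, neg_one_mul, ← sum_neg_distrib]
  refine sum_bij' (fun x _ ↦ x.2) (fun j _ ↦ (n - j, j)) ?_ ?_ ?_ (fun _ _ ↦ rfl) ?_
  all_goals intro x hx
  all_goals simp only [mem_filter, HasAntidiagonal.mem_antidiagonal, mem_Icc] at hx ⊢
  · omega
  · omega
  · ext <;> simp; omega
  · rw [show n - x.2 = x.1 by omega]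
    simp [psum, mul_comm]

theorem eq_of_sum_mul_eq_sum_mul {A : Type*} [CommRing A] {a S T : ℕ → A} (ha0 : a 0 = 1)
    (h : ∀ n, ∑ j ∈ Icc 1 n, S j * a (n - j) = ∑ j ∈ Icc 1 n, T j * a (n - j)) {n : ℕ}
    (hn : 1 ≤ n) : S n = T n := by
  induction n using Nat.strong_induction_on with
  | _ n ih =>
  have hsum := h n
  rw [← sum_erase_add _ _ (mem_Icc.2 ⟨hn, le_rfl⟩), ← sum_erase_add _ _ (mem_Icc.2 ⟨hn, le_rfl⟩),
    sum_congr rfl fun j hj ↦ ?_, add_right_inj, Nat.sub_self, ha0, mul_one, mul_one] at hsum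
  · exact hsum
  · rw [mem_erase, mem_Icc] at hj
    rw [ih j (by omega) hj.2.1]

theorem exists_eq_neg_sum_pow {k : Type*} [Field k] [IsAlgClosed k] {a S : ℕ → k} {N : ℕ}
    (ha0 : a 0 = 1) (haN : ∀ n, N < n → a n = 0)
    (hrec : ∀ n : ℕ, n * a n = ∑ j ∈ Icc 1 n, S j * a (n - j)) :
    ∃ w : Fin N → k, ∀ n, 1 ≤ n → S n = -∑ i, w i ^ n := by
  obtain ⟨w, hw⟩ := exists_aeval_esymm_eq ha0 haN
  refine ⟨w, fun n hn ↦ eq_of_sum_mul_eq_sum_mul (T := fun n ↦ -∑ i, w i ^ n) ha0 (fun n ↦ ?_) hn⟩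
  rw [← hrec, hw, mul_aeval_esymm_eq_sum]
  simp only [hw]

end PowerSums

section LSeries

open Polynomial UniqueFactorizationMonoid

variable {F A : Type*} [Field F] [Fintype F] [CommSemiring A]

theorem finite_setOf_monic_natDegree_eq (F : Type*) [Field F] [Finite F] (n : ℕ) :
    {g : F[X] | g.Monic ∧ g.natDegree = n}.Finite := by
  refine (Set.finite_range fun c : Fin (n + 1) → F ↦ ∑ i, C (c i) * X ^ (i : ℕ)).subset ?_
  rintro g ⟨-, rfl⟩
  refine ⟨fun i ↦ g.coeff i, ?_⟩
  change ∑ i : Fin (g.natDegree + 1), C (g.coeff (i : ℕ)) * X ^ (i : ℕ) = g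
  rw [Fin.sum_univ_eq_sum_range (fun i ↦ C (g.coeff i) * X ^ i)]
  exact g.as_sum_range_C_mul_X_pow.symm

/-- The monic polynomials of degree `n` over a finite field. -/
noncomputable def monicsOfDegree (F : Type*) [Field F] [Fintype F] (n : ℕ) : Finset F[X] :=
  (finite_setOf_monic_natDegree_eq F n).toFinset

theorem mem_monicsOfDegree {n : ℕ} {g : F[X]} :
    g ∈ monicsOfDegree F n ↔ g.Monic ∧ g.natDegree = n := by
  simp [monicsOfDegree]

theorem monicsOfDegree_zero : monicsOfDegree F 0 = {1} := by
  ext g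
  rw [mem_monicsOfDegree, mem_singleton]
  exact ⟨fun h ↦ h.1.natDegree_eq_zero.1 h.2, by rintro rfl; simp⟩

open scoped Classical in
/-- The monic irreducible polynomials of degree at most `n` over a finite field. -/
noncomputable def monicIrreducibles (F : Type*) [Field F] [Fintype F] (n : ℕ) : Finset F[X] :=
  {P ∈ (Icc 1 n).biUnion (monicsOfDegree F) | Irreducible P}

theorem mem_monicIrreducibles {n : ℕ} {P : F[X]} :
    P ∈ monicIrreducibles F n ↔ P.Monic ∧ Irreducible P ∧ P.natDegree ≤ n := by
  simp only [monicIrreducibles, mem_filter, mem_biUnion, mem_Icc, mem_monicsOfDegree]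
  constructor
  · rintro ⟨⟨j, hj, hP, rfl⟩, hirr⟩
    exact ⟨hP, hirr, hj.2⟩
  · rintro ⟨hP, hirr, hn⟩
    exact ⟨⟨P.natDegree, ⟨hirr.natDegree_pos, hn⟩, hP, rfl⟩, hirr⟩

theorem monicIrreducibles_mono : Monotone (monicIrreducibles F) := fun _ _ hmn _ hP ↦
  have ⟨hmonic, hirr, hdeg⟩ := mem_monicIrreducibles.1 hP
  mem_monicIrreducibles.2 ⟨hmonic, hirr, hdeg.trans hmn⟩

/-- The coefficient of `T ^ n` in the `L`-series `∑ L(g) T ^ deg g` (over monic `g`) attached to a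
completely multiplicative function `L`. -/
noncomputable def lCoeff (L : F[X] →* A) (n : ℕ) : A :=
  ∑ g ∈ monicsOfDegree F n, L g

/-- The coefficient of `T ^ j` in `T` times the logarithmic derivative of the `L`-series of `L`,
read off from its Euler product. -/
noncomputable def lLogDerivCoeff (L : F[X] →* A) (j : ℕ) : A :=
  ∑ P ∈ monicIrreducibles F j,
    if P.natDegree ∣ j then P.natDegree * L P ^ (j / P.natDegree) else 0

theorem lCoeff_zero (L : F[X] →* A) : lCoeff L 0 = 1 := by
  rw [lCoeff, monicsOfDegree_zero, sum_singleton, map_one]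

open scoped Classical in
theorem card_filter_pow_dvd_eq_count {F : Type*} [Field F] {g P : F[X]} (hg : g ≠ 0)
    (hP : P.Monic) (hirr : Irreducible P) :
    #{k ∈ Icc 1 g.natDegree | P ^ k ∣ g} = (normalizedFactors g).count P := by
  have hmult := emultiplicity_eq_count_normalizedFactors hirr hg
  rw [hP.normalize_eq_self] at hmult
  have hdvd (k : ℕ) : P ^ k ∣ g ↔ k ≤ (normalizedFactors g).count P := by
    rw [pow_dvd_iff_le_emultiplicity, hmult, Nat.cast_le]
  have hle : (normalizedFactors g).count P ≤ g.natDegree :=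
    calc (normalizedFactors g).count P
        ≤ (normalizedFactors g).count P * P.natDegree :=
          Nat.le_mul_of_pos_right _ hirr.natDegree_pos
      _ ≤ g.natDegree := by
          rw [← natDegree_pow]
          exact natDegree_le_of_dvd ((hdvd _).2 le_rfl) hg
  have hfilter : ({k ∈ Icc 1 g.natDegree | P ^ k ∣ g} : Finset ℕ) =
      Icc 1 ((normalizedFactors g).count P) := by
    ext k
    simp only [mem_filter, mem_Icc, hdvd]
    omega
  rw [hfilter, Nat.card_Icc, Nat.add_sub_cancel]

open scoped Classical in
theorem natDegree_eq_sum_count_normalizedFactors {g : F[X]} (hg : g.Monic) :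
    g.natDegree = ∑ P ∈ monicIrreducibles F g.natDegree,
      P.natDegree * (normalizedFactors g).count P := by
  have hprod : (normalizedFactors g).prod = g := by
    rw [prod_normalizedFactors_eq hg.ne_zero, hg.normalize_eq_self]
  have hsum : g.natDegree = ∑ P ∈ (normalizedFactors g).toFinset,
      P.natDegree * (normalizedFactors g).count P := by
    conv_lhs => rw [← hprod]
    rw [natDegree_multiset_prod _ (zero_notMem_normalizedFactors g), sum_multiset_map_count]
    simp only [smul_eq_mul, mul_comm]
  refine hsum.trans (sum_subset (fun P hP ↦ ?_) fun P _ hP ↦ ?_)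
  · rw [Multiset.mem_toFinset] at hP
    have hirr := irreducible_of_normalized_factor P hP
    refine mem_monicIrreducibles.2 ⟨?_, hirr,
      natDegree_le_of_dvd (dvd_of_mem_normalizedFactors hP) hg.ne_zero⟩
    rw [← normalize_normalized_factor P hP]
    exact monic_normalize hirr.ne_zero
  · rw [Multiset.mem_toFinset] at hP
    rw [Multiset.count_eq_zero_of_notMem hP, mul_zero]

open scoped Classical in
theorem natDegree_eq_sum_card_pow_dvd {g : F[X]} (hg : g.Monic) :
    g.natDegree = ∑ P ∈ monicIrreducibles F g.natDegree,
      P.natDegree * #{k ∈ Icc 1 g.natDegree | P ^ k ∣ g} := by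
  conv_lhs => rw [natDegree_eq_sum_count_normalizedFactors hg]
  refine sum_congr rfl fun P hP ↦ ?_
  obtain ⟨hmonic, hirr, -⟩ := mem_monicIrreducibles.1 hP
  rw [card_filter_pow_dvd_eq_count hg.ne_zero hmonic hirr]

open scoped Classical in
theorem sum_monicsOfDegree_filter_dvd (L : F[X] →* A) {Q : F[X]} (hQ : Q.Monic) (n : ℕ) :
    ∑ g ∈ monicsOfDegree F n with Q ∣ g, L g =
      if Q.natDegree ≤ n then L Q * lCoeff L (n - Q.natDegree) else 0 := by
  split_ifs with h
  · rw [lCoeff, mul_sum]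
    refine (sum_bij (fun g _ ↦ Q * g) ?_ (fun _ _ _ _ ↦ mul_left_cancel₀ hQ.ne_zero) ?_
      fun g _ ↦ (map_mul L Q g).symm).symm
    · intro g hg
      obtain ⟨hmonic, hdeg⟩ := mem_monicsOfDegree.1 hg
      refine mem_filter.2 ⟨mem_monicsOfDegree.2 ⟨hQ.mul hmonic, ?_⟩, dvd_mul_right _ _⟩
      rw [hQ.natDegree_mul hmonic, hdeg, Nat.add_sub_cancel' h]
    · intro _ hg
      obtain ⟨hg, g, rfl⟩ := mem_filter.1 hg
      obtain ⟨hmonic, hdeg⟩ := mem_monicsOfDegree.1 hg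
      have hg_monic : g.Monic := hQ.of_mul_monic_left hmonic
      rw [hQ.natDegree_mul hg_monic] at hdeg
      exact ⟨g, mem_monicsOfDegree.2 ⟨hg_monic, by omega⟩, rfl⟩
  · rw [filter_false_of_mem, sum_empty]
    intro g hg hdvd
    obtain ⟨hmonic, rfl⟩ := mem_monicsOfDegree.1 hg
    exact h (natDegree_le_of_dvd hdvd hmonic.ne_zero)

theorem sum_Icc_filter_mul_le {M : Type*} [AddCommMonoid M] {d : ℕ} (hd : 0 < d) (n : ℕ)
    (f : ℕ → M) :
    ∑ k ∈ Icc 1 n with k * d ≤ n, f k = ∑ j ∈ Icc 1 n with d ∣ j, f (j / d) := by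
  refine sum_nbij' (· * d) (· / d) ?_ ?_ (fun k _ ↦ Nat.mul_div_cancel k hd) ?_ ?_
  · intro k hk
    simp only [mem_filter, mem_Icc] at hk ⊢
    exact ⟨⟨Nat.mul_pos hk.1.1 hd, hk.2⟩, dvd_mul_left _ _⟩
  · intro j hj
    simp only [mem_filter, mem_Icc] at hj ⊢
    obtain ⟨⟨hj1, hjn⟩, hdj⟩ := hj
    exact ⟨⟨Nat.div_pos (Nat.le_of_dvd hj1 hdj) hd, (Nat.div_le_self j d).trans hjn⟩,
      (Nat.div_mul_le_self j d).trans hjn⟩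
  · intro j hj
    exact Nat.div_mul_cancel (mem_filter.1 hj).2
  · intro k _
    rw [Nat.mul_div_cancel k hd]

open scoped Classical in
theorem natCast_mul_lCoeff_eq_sum_monicIrreducibles (L : F[X] →* A) (n : ℕ) :
    n * lCoeff L n = ∑ P ∈ monicIrreducibles F n, ∑ k ∈ Icc 1 n,
      P.natDegree * ∑ g ∈ monicsOfDegree F n with P ^ k ∣ g, L g := by
  have hg : ∀ g ∈ monicsOfDegree F n, n * L g = ∑ P ∈ monicIrreducibles F n, ∑ k ∈ Icc 1 n,
      (P.natDegree : A) * if P ^ k ∣ g then L g else 0 := by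
    intro g hg
    obtain ⟨hmonic, rfl⟩ := mem_monicsOfDegree.1 hg
    conv_lhs => rw [natDegree_eq_sum_card_pow_dvd hmonic]
    rw [Nat.cast_sum, sum_mul]
    refine sum_congr rfl fun P _ ↦ ?_
    rw [← mul_sum, ← sum_filter, sum_const, nsmul_eq_mul, Nat.cast_mul, mul_assoc]
  rw [lCoeff, mul_sum, sum_congr rfl hg, sum_comm]
  refine sum_congr rfl fun P _ ↦ ?_
  rw [sum_comm]
  refine sum_congr rfl fun k _ ↦ ?_
  rw [← mul_sum, sum_filter]

theorem lLogDerivCoeff_eq_sum_of_le (L : F[X] →* A) {j n : ℕ} (hj : 0 < j) (hjn : j ≤ n) :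
    lLogDerivCoeff L j = ∑ P ∈ monicIrreducibles F n,
      if P.natDegree ∣ j then P.natDegree * L P ^ (j / P.natDegree) else 0 := by
  refine sum_subset (monicIrreducibles_mono hjn) fun P hP hPj ↦ if_neg fun hdvd ↦ hPj ?_
  obtain ⟨hmonic, hirr, -⟩ := mem_monicIrreducibles.1 hP
  exact mem_monicIrreducibles.2 ⟨hmonic, hirr, Nat.le_of_dvd hj hdvd⟩

theorem natCast_mul_lCoeff (L : F[X] →* A) (n : ℕ) :
    n * lCoeff L n = ∑ j ∈ Icc 1 n, lLogDerivCoeff L j * lCoeff L (n - j) := by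
  classical
  have hj : ∀ j ∈ Icc 1 n, lLogDerivCoeff L j * lCoeff L (n - j) =
      ∑ P ∈ monicIrreducibles F n, if P.natDegree ∣ j then
        P.natDegree * L P ^ (j / P.natDegree) * lCoeff L (n - j) else 0 := by
    intro j hj
    rw [mem_Icc] at hj
    simp only [lLogDerivCoeff_eq_sum_of_le L hj.1 hj.2, sum_mul, ite_mul, zero_mul]
  rw [natCast_mul_lCoeff_eq_sum_monicIrreducibles, sum_congr rfl hj, sum_comm (s := Icc 1 n)]
  refine sum_congr rfl fun P hP ↦ ?_
  obtain ⟨hmonic, hirr, -⟩ := mem_monicIrreducibles.1 hP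
  simp only [sum_monicsOfDegree_filter_dvd L (hmonic.pow _), hmonic.natDegree_pow, map_pow,
    mul_ite, mul_zero, ← sum_filter]
  rw [sum_Icc_filter_mul_le hirr.natDegree_pos n fun k ↦
    (P.natDegree : A) * (L P ^ k * lCoeff L (n - k * P.natDegree))]
  refine sum_congr rfl fun j hj ↦ ?_
  rw [Nat.div_mul_cancel (mem_filter.1 hj).2, mul_assoc]

end LSeries

section FiniteFieldExtension

open Polynomial

variable {F K : Type*} [Field F] [Field K] [Algebra F K]

theorem norm_eq_coeff_zero_minpoly_pow [FiniteDimensional F K] (y : K) :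
    Algebra.norm F y = ((-1) ^ (minpoly F y).natDegree * (minpoly F y).coeff 0) ^
      (Module.finrank F K / (minpoly F y).natDegree) := by
  have hy : IsIntegral F y := Algebra.IsIntegral.isIntegral y
  have hgen := Algebra.PowerBasis.norm_gen_eq_coeff_zero_minpoly
    (IntermediateField.adjoin.powerBasis hy)
  rw [IntermediateField.adjoin.powerBasis_gen, IntermediateField.adjoin.powerBasis_dim,
    IntermediateField.minpoly_gen] at hgen
  have hrank := Module.finrank_mul_finrank F (IntermediateField.adjoin F {y}) K
  rw [IntermediateField.adjoin.finrank hy] at hrank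
  rw [Algebra.norm_eq_norm_adjoin F y, hgen, ← hrank,
    Nat.mul_div_cancel_left _ (minpoly.natDegree_pos hy)]

theorem norm_algebraMap_sub_eq_eval_minpoly_pow [FiniteDimensional F K] (a : F) (x : K) :
    Algebra.norm F (algebraMap F K a - x) =
      (minpoly F x).eval a ^ (Module.finrank F K / (minpoly F x).natDegree) := by
  have hneg : (-1 : F) ^ Module.finrank F K = ((-1) ^ (minpoly F x).natDegree) ^
      (Module.finrank F K / (minpoly F x).natDegree) := by
    rw [← pow_mul, Nat.mul_div_cancel' (minpoly.degree_dvd (Algebra.IsIntegral.isIntegral x))]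
  have hmin : minpoly F (x - algebraMap F K a) = (minpoly F x).comp (X + C a) :=
    minpoly.sub_algebraMap x a
  have hsub : algebraMap F K a - x = algebraMap F K (-1) * (x - algebraMap F K a) := by simp
  rw [hsub, map_mul, Algebra.norm_algebraMap, norm_eq_coeff_zero_minpoly_pow, hmin,
    natDegree_comp, natDegree_X_add_C, mul_one, coeff_zero_eq_eval_zero, eval_comp, eval_add,
    eval_X, eval_C, zero_add, hneg, ← mul_pow, ← mul_assoc, ← mul_pow]
  simp only [neg_mul_neg, one_mul, one_pow]

theorem natCard_minpoly_eq [Finite F] [Finite K] {P : F[X]} (hP : P.Monic) (hirr : Irreducible P)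
    (hdvd : P.natDegree ∣ Module.finrank F K) :
    Nat.card {x : K // minpoly F x = P} = P.natDegree := by
  have : Fact (Irreducible P) := ⟨hirr⟩
  have hrank : Module.finrank F (AdjoinRoot P) = P.natDegree := by
    rw [(AdjoinRoot.powerBasis hirr.ne_zero).finrank, AdjoinRoot.powerBasis_dim]
  have hcard := FiniteField.natCard_algHom_of_finrank_dvd (F := F) (K := AdjoinRoot P) (L := K)
    (hrank ▸ hdvd)
  rw [← hrank, ← hcard]
  classical
  rw [Nat.card_congr (AdjoinRoot.equiv K F P hirr.ne_zero)]
  refine Nat.card_congr (Equiv.subtypeEquivRight fun x ↦ ?_)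
  rw [mem_aroots]
  constructor
  · rintro rfl
    exact ⟨hirr.ne_zero, minpoly.aeval _ _⟩
  · exact fun h ↦ (minpoly.eq_of_irreducible_of_monic hirr h.2 hP).symm

theorem lLogDerivCoeff_finrank {A : Type*} [CommSemiring A] [Fintype F] [Fintype K]
    (L : F[X] →* A) :
    lLogDerivCoeff L (Module.finrank F K) =
      ∑ x : K, L (minpoly F x) ^ (Module.finrank F K / (minpoly F x).natDegree) := by
  classical
  have hxint (x : K) : IsIntegral F x := Algebra.IsIntegral.isIntegral x
  have hdvd (x : K) : (minpoly F x).natDegree ∣ Module.finrank F K := minpoly.degree_dvd (hxint x)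
  have hmaps : ∀ x ∈ (univ : Finset K), minpoly F x ∈ monicIrreducibles F (Module.finrank F K) :=
    fun x _ ↦ mem_monicIrreducibles.2 ⟨minpoly.monic (hxint x), minpoly.irreducible (hxint x),
      Nat.le_of_dvd Module.finrank_pos (hdvd x)⟩
  rw [← sum_fiberwise_of_maps_to hmaps, lLogDerivCoeff]
  refine sum_congr rfl fun P hP ↦ ?_
  obtain ⟨hmonic, hirr, -⟩ := mem_monicIrreducibles.1 hP
  rw [sum_congr rfl (g := fun _ ↦ L P ^ (Module.finrank F K / P.natDegree))
    (fun x hx ↦ by rw [(mem_filter.1 hx).2]), sum_const, nsmul_eq_mul]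
  split_ifs with h
  · rw [← Fintype.card_subtype, ← Nat.card_eq_fintype_card, natCard_minpoly_eq hmonic hirr h]
  · rw [filter_eq_empty_iff.2, card_empty, Nat.cast_zero, zero_mul]
    rintro x - rfl
    exact h (hdvd x)

end FiniteFieldExtension

section Weil

open Polynomial

variable {F : Type*} [Field F]

theorem norm_mulChar_le_one [Finite F] (χ : MulChar F ℂ) (x : F) : ‖χ x‖ ≤ 1 := by
  have := Fintype.ofFinite F
  rcases eq_or_ne x 0 with rfl | hx
  · rw [MulChar.map_zero, norm_zero]
    exact zero_le_one
  · refine (Complex.norm_eq_one_of_pow_eq_one (n := Fintype.card F - 1) ?_ ?_).le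
    · rw [← map_pow, FiniteField.pow_card_sub_one_eq_one x hx, map_one]
    · exact (Nat.sub_pos_of_lt Fintype.one_lt_card).ne'

/-- The completely multiplicative function on `F[X]` whose `L`-series encodes the character sum
`∑ x, ∏ α ∈ S, χ (α - x) ^ e α`. -/
def evalCharHom {R : Type*} [CommMonoidWithZero R] (χ : MulChar F R) (S : Finset F) (e : F → ℕ) :
    F[X] →* R where
  toFun g := ∏ α ∈ S, χ (g.eval α) ^ e α
  map_one' := by simp
  map_mul' g h := by simp [mul_pow, prod_mul_distrib]

theorem evalCharHom_apply {R : Type*} [CommMonoidWithZero R] (χ : MulChar F R) (S : Finset F)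
    (e : F → ℕ) (g : F[X]) : evalCharHom χ S e g = ∏ α ∈ S, χ (g.eval α) ^ e α :=
  rfl

theorem add_mem_monicsOfDegree [Fintype F] {n : ℕ} {g h : F[X]} (hg : g ∈ monicsOfDegree F n)
    (hh : h.natDegree < n) : g + h ∈ monicsOfDegree F n := by
  obtain ⟨hmonic, rfl⟩ := mem_monicsOfDegree.1 hg
  exact mem_monicsOfDegree.2 ⟨hmonic.add_of_left (degree_lt_degree hh),
    natDegree_add_eq_left_of_natDegree_lt hh⟩

theorem sum_monicsOfDegree_add [Fintype F] {M : Type*} [AddCommMonoid M] {n : ℕ} {h : F[X]}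
    (hh : h.natDegree < n) (f : F[X] → M) :
    ∑ g ∈ monicsOfDegree F n, f (g + h) = ∑ g ∈ monicsOfDegree F n, f g := by
  refine sum_nbij' (· + h) (· - h) (fun g hg ↦ add_mem_monicsOfDegree hg hh) (fun g hg ↦ ?_)
    (fun g _ ↦ add_sub_cancel_right g h) (fun g _ ↦ sub_add_cancel g h) fun _ _ ↦ rfl
  rw [sub_eq_add_neg]
  exact add_mem_monicsOfDegree hg (by rwa [natDegree_neg])

theorem sum_mulChar_add_mul_eq_zero [Fintype F] {R : Type*} [CommRing R] [IsDomain R]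
    {χ : MulChar F R} (hχ : χ ≠ 1) (a : F) {b : F} (hb : b ≠ 0) : ∑ t, χ (a + t * b) = 0 := by
  have hbij : Function.Bijective fun t ↦ a + t * b :=
    (Equiv.addLeft a).bijective.comp (mulRight_bijective₀ _ hb)
  rw [hbij.sum_comp fun y ↦ χ y, MulChar.sum_eq_zero_of_ne_one hχ]

theorem lCoeff_evalCharHom_eq_zero [Fintype F] {R : Type*} [CommRing R] [IsDomain R] [CharZero R]
    {χ : MulChar F R} (hχ : χ ≠ 1) {S : Finset F} {e : F → ℕ} {α₀ : F} (hα₀ : α₀ ∈ S)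
    (he : e α₀ = 1) {n : ℕ} (hn : #S ≤ n) : lCoeff (evalCharHom χ S e) n = 0 := by
  classical
  let h : F[X] := Lagrange.nodal (S.erase α₀) id
  have hdeg (t : F) : (C t * h).natDegree < n := by
    refine (natDegree_C_mul_le t h).trans_lt ?_
    rw [Lagrange.natDegree_nodal]
    exact (card_erase_lt_of_mem hα₀).trans_le hn
  have hne : h.eval α₀ ≠ 0 :=
    Lagrange.eval_nodal_not_at_node fun α hα ↦ (ne_of_mem_erase hα).symm
  have htranslate (g : F[X]) (t : F) : evalCharHom χ S e (g + C t * h) =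
      (∏ α ∈ S.erase α₀, χ (g.eval α) ^ e α) * χ (g.eval α₀ + t * h.eval α₀) := by
    rw [evalCharHom_apply, ← prod_erase_mul S _ hα₀, he, pow_one, eval_add, eval_mul, eval_C]
    congr 1
    refine prod_congr rfl fun α hα ↦ ?_
    have hzero : h.eval α = 0 := Lagrange.eval_nodal_at_node (v := id) hα
    rw [eval_add, eval_mul, hzero, mul_zero, add_zero]
  have hsum : (Fintype.card F : R) * lCoeff (evalCharHom χ S e) n = 0 :=
    calc (Fintype.card F : R) * lCoeff (evalCharHom χ S e) n
        = ∑ t, ∑ g ∈ monicsOfDegree F n, evalCharHom χ S e (g + C t * h) := by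
          simp only [sum_monicsOfDegree_add (hdeg _), sum_const, card_univ, nsmul_eq_mul, lCoeff]
      _ = 0 := by
          rw [sum_comm]
          simp only [htranslate, ← mul_sum, sum_mulChar_add_mul_eq_zero hχ _ hne, mul_zero,
            sum_const_zero]
  exact (mul_eq_zero.1 hsum).resolve_left (Nat.cast_ne_zero.2 Fintype.card_ne_zero)

theorem lLogDerivCoeff_evalCharHom [Fintype F] {K : Type*} [Field K] [Fintype K] [Algebra F K]
    {R : Type*} [CommRing R] (χ : MulChar F R) (S : Finset F) (e : F → ℕ) :
    lLogDerivCoeff (evalCharHom χ S e) (Module.finrank F K) =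
      ∑ x : K, χ (Algebra.norm F (aeval x (∏ α ∈ S, (C α - X) ^ e α))) := by
  rw [lLogDerivCoeff_finrank]
  refine sum_congr rfl fun x _ ↦ ?_
  rw [evalCharHom_apply, map_prod, map_prod, map_prod, ← prod_pow]
  refine prod_congr rfl fun α _ ↦ ?_
  rw [map_pow, map_pow, map_pow, map_sub, aeval_C, aeval_X,
    norm_algebraMap_sub_eq_eval_minpoly_pow, map_pow, ← pow_mul, ← pow_mul, mul_comm]

theorem card_sub_one_mul_card_filter_norm_eq_le [Fintype F] [DecidableEq F] {K : Type*} [Field K]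
    [Fintype K] [Algebra F K] {f : F[X]} {a : F} (hfa : f.IsRoot a)
    (hfa' : ¬f.derivative.IsRoot a) (c : F) :
    (Fintype.card F - 1) * #{x : K | Algebra.norm F (aeval x f) = c} ≤
      Fintype.card K + stepanovConst (Fintype.card F - 1) f.natDegree *
        Nat.sqrt (Fintype.card K) := by
  classical
  have hF : 0 < Fintype.card F - 1 := Nat.sub_pos_of_lt Fintype.one_lt_card
  obtain ⟨E, hE⟩ : Fintype.card F - 1 ∣ Fintype.card K - 1 := by
    rw [Module.card_eq_pow_finrank (K := F) (V := K)]
    simpa only [one_pow] using Nat.sub_dvd_pow_sub_pow (Fintype.card F) 1 _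
  have hnorm (z : K) : algebraMap F K (Algebra.norm F z) = z ^ E := by
    rw [FiniteField.algebraMap_norm_eq_pow, Nat.card_eq_fintype_card, Nat.card_eq_fintype_card, hE,
      Nat.mul_div_cancel_left _ hF]
  have hroot : (f.map (algebraMap F K)).IsRoot (algebraMap F K a) := hfa.map
  have hroot' : ¬(f.map (algebraMap F K)).derivative.IsRoot (algebraMap F K a) := by
    rwa [derivative_map, isRoot_map_iff (algebraMap F K).injective]
  have hbound := stepanov_bound hroot hroot' (d := Fintype.card F - 1) (e := E)
    (by rw [← hE, Nat.sub_add_cancel Fintype.card_pos]) (algebraMap F K c)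
  rw [natDegree_map] at hbound
  simpa only [eval_map_algebraMap, ← hnorm, (algebraMap F K).injective.eq_iff] using hbound

theorem norm_sum_mul_mulChar_le [Fintype F] {χ : MulChar F ℂ} (hχ : χ ≠ 1)
    {N : F → ℝ} {T : ℝ} (hN : ∀ c, N c ≤ T) :
    ‖∑ c, N c * χ c‖ ≤ (Fintype.card F - 1 : ℝ) * T - (∑ c, N c - N 0) := by
  classical
  have hshift : ∑ c, N c * χ c = ∑ c ∈ univ.erase 0, ((N c - T : ℝ) : ℂ) * χ c := by
    rw [sum_erase univ (a := (0 : F)) (f := fun c ↦ ((N c - T : ℝ) : ℂ) * χ c)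
      (by rw [MulChar.map_zero, mul_zero])]
    simp only [Complex.ofReal_sub, sub_mul, sum_sub_distrib, ← mul_sum,
      MulChar.sum_eq_zero_of_ne_one hχ, mul_zero, sub_zero]
  calc ‖∑ c, N c * χ c‖
      ≤ ∑ c ∈ univ.erase 0, ‖((N c - T : ℝ) : ℂ) * χ c‖ := by
        rw [hshift]
        exact norm_sum_le _ _
    _ ≤ ∑ c ∈ univ.erase 0, (T - N c) := by
        refine sum_le_sum fun c _ ↦ ?_
        rw [norm_mul, Complex.norm_real, Real.norm_eq_abs, abs_sub_comm,
          abs_of_nonneg (sub_nonneg.2 (hN c))]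
        exact mul_le_of_le_one_right (sub_nonneg.2 (hN c)) (norm_mulChar_le_one χ c)
    _ = (Fintype.card F - 1 : ℝ) * T - (∑ c, N c - N 0) := by
        rw [sum_sub_distrib, sum_const, card_erase_of_mem (mem_univ _), card_univ, nsmul_eq_mul,
          Nat.cast_pred Fintype.card_pos, sum_erase_eq_sub (mem_univ _)]

theorem norm_sum_mulChar_norm_aeval_le [Fintype F] {K : Type*} [Field K] [Fintype K] [Algebra F K]
    {χ : MulChar F ℂ} (hχ : χ ≠ 1) {f : F[X]} {a : F} (hfa : f.IsRoot a)
    (hfa' : ¬f.derivative.IsRoot a) :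
    ‖∑ x : K, χ (Algebra.norm F (aeval x f))‖ ≤
      stepanovConst (Fintype.card F - 1) f.natDegree * √(Fintype.card K) + f.natDegree := by
  classical
  let N (c : F) : ℕ := #{x : K | Algebra.norm F (aeval x f) = c}
  have hf : f ≠ 0 := by
    rintro rfl
    simp at hfa'
  have hF : (0 : ℝ) < Fintype.card F - 1 :=
    sub_pos.2 (Nat.one_lt_cast.2 Fintype.one_lt_card)
  have hNle (c : F) : (N c : ℝ) ≤ (Fintype.card K + stepanovConst (Fintype.card F - 1) f.natDegree *
      √(Fintype.card K)) / (Fintype.card F - 1) := by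
    rw [le_div_iff₀' hF, ← Nat.cast_pred Fintype.card_pos]
    refine le_trans ?_ (add_le_add_right (mul_le_mul_of_nonneg_left
      (Real.nat_sqrt_le_real_sqrt (a := Fintype.card K)) (Nat.cast_nonneg _)) _)
    exact_mod_cast card_sub_one_mul_card_filter_norm_eq_le hfa hfa' c
  have hN0 : N 0 ≤ f.natDegree := by
    refine le_trans (card_le_card fun x hx ↦ ?_) ((card_roots' (f.map (algebraMap F K))).trans
      (natDegree_map_le (f := algebraMap F K)) |> (Multiset.toFinset_card_le _).trans)
    rw [mem_filter, Algebra.norm_eq_zero_iff] at hx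
    rw [Multiset.mem_toFinset, mem_roots (map_ne_zero hf), IsRoot, eval_map_algebraMap, hx.2]
  have hNsum : ∑ c, N c = Fintype.card K :=
    (card_eq_sum_card_fiberwise fun _ _ ↦ mem_coe.2 (mem_univ _)).symm
  have hfiber : ∑ x : K, χ (Algebra.norm F (aeval x f)) = ∑ c, (N c : ℝ) * χ c := by
    rw [← sum_fiberwise (g := fun x : K ↦ Algebra.norm F (aeval x f))]
    refine sum_congr rfl fun c _ ↦ ?_
    rw [sum_congr rfl (g := fun _ ↦ χ c) (fun x hx ↦ by rw [(mem_filter.1 hx).2]), sum_const,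
      nsmul_eq_mul, Complex.ofReal_natCast]
  rw [hfiber]
  refine (norm_sum_mul_mulChar_le hχ hNle).trans ?_
  rw [mul_div_cancel₀ _ hF.ne', ← Nat.cast_sum, hNsum]
  linarith [Nat.cast_le (α := ℝ).2 hN0]

theorem exists_norm_lLogDerivCoeff_evalCharHom_le [Fintype F] {χ : MulChar F ℂ} (hχ : χ ≠ 1)
    {S : Finset F} {e : F → ℕ} {α₀ : F} (hα₀ : α₀ ∈ S) (he : e α₀ = 1) :
    ∃ B : ℝ, ∀ n, 1 ≤ n →
      ‖lLogDerivCoeff (evalCharHom χ S e) n‖ ≤ B * √(Fintype.card F) ^ n := by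
  classical
  let f : F[X] := ∏ α ∈ S, (C α - X) ^ e α
  let g : F[X] := ∏ α ∈ S.erase α₀, (C α - X) ^ e α
  have hfg : f = (C α₀ - X) * g := by
    simp only [f, g]
    rw [← mul_prod_erase S _ hα₀, he, pow_one]
  have hroot : f.IsRoot α₀ := by simp [hfg]
  have hg : g.eval α₀ ≠ 0 := by
    simp only [g, eval_prod, eval_pow, eval_sub, eval_C, eval_X]
    exact prod_ne_zero_iff.2 fun α hα ↦ pow_ne_zero _ (sub_ne_zero.2 (ne_of_mem_erase hα))
  have hroot' : ¬f.derivative.IsRoot α₀ := by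
    simpa [hfg, derivative_mul] using hg
  obtain ⟨p, _⟩ := CharP.exists F
  have : Fact p.Prime := ⟨CharP.char_is_prime F p⟩
  refine ⟨stepanovConst (Fintype.card F - 1) f.natDegree + f.natDegree, fun n hn ↦ ?_⟩
  have : NeZero n := ⟨by omega⟩
  let K := FiniteField.Extension F p n
  have := Fintype.ofFinite K
  have hcard : √(Fintype.card K) = √(Fintype.card F) ^ n := by
    rw [← Nat.card_eq_fintype_card, FiniteField.natCard_extension, Nat.card_eq_fintype_card,
      Nat.cast_pow, Real.sqrt_eq_iff_mul_self_eq (by positivity) (by positivity), ← mul_pow,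
      Real.mul_self_sqrt (Nat.cast_nonneg _)]
  have hone : 1 ≤ √(Fintype.card F) ^ n :=
    one_le_pow₀ (Real.one_le_sqrt.2 (Nat.one_le_cast.2 Fintype.card_pos))
  have hbound := norm_sum_mulChar_norm_aeval_le (K := K) hχ hroot hroot'
  rw [← lLogDerivCoeff_evalCharHom, FiniteField.finrank_extension, hcard] at hbound
  rw [add_mul]
  exact hbound.trans (add_le_add_right (le_mul_of_one_le_right (Nat.cast_nonneg _) hone) _)

theorem norm_sum_prod_mulChar_pow_le [Fintype F] {χ : MulChar F ℂ} (hχ : χ ≠ 1) {S : Finset F}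
    {e : F → ℕ} {α₀ : F} (hα₀ : α₀ ∈ S) (he : e α₀ = 1) :
    ‖∑ x, ∏ α ∈ S, χ (α - x) ^ e α‖ ≤ #S * √(Fintype.card F) := by
  obtain ⟨B, hB⟩ := exists_norm_lLogDerivCoeff_evalCharHom_le hχ hα₀ he
  obtain ⟨w, hw⟩ := exists_eq_neg_sum_pow (lCoeff_zero (evalCharHom χ S e))
    (fun n hn ↦ lCoeff_evalCharHom_eq_zero hχ hα₀ he hn.le) (natCast_mul_lCoeff _)
  have hroots := norm_le_of_norm_sum_pow_le (w := w)
    (Real.sqrt_pos.2 (Nat.cast_pos.2 Fintype.card_pos))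
    fun n hn ↦ by rw [← norm_neg, ← hw n hn]; exact hB n hn
  have hsum : ∑ x, ∏ α ∈ S, χ (α - x) ^ e α = -∑ i, w i := by
    have hone := lLogDerivCoeff_evalCharHom (K := F) χ S e
    rw [Module.finrank_self, hw 1 le_rfl] at hone
    simpa [Algebra.norm_self] using hone.symm
  calc ‖∑ x, ∏ α ∈ S, χ (α - x) ^ e α‖
      ≤ ∑ i, ‖w i‖ := by
        rw [hsum, norm_neg]
        exact norm_sum_le _ _
    _ ≤ #S * √(Fintype.card F) := by
        simpa using sum_le_card_nsmul univ (fun i ↦ ‖w i‖) _ fun i _ ↦ hroots i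

end Weil

section Moment

variable {F : Type*} [Field F]

theorem exists_inv_mulChar_apply_eq_pow [Finite F] {R : Type*} [CommMonoidWithZero R]
    [Nontrivial R] (χ : MulChar F R) : ∃ s, ∀ x, χ⁻¹ x = χ x ^ s := by
  have := Fintype.ofFinite F
  have hq : 1 < Fintype.card F := Fintype.one_lt_card
  refine ⟨2 * Fintype.card F - 3, fun x ↦ ?_⟩
  rw [MulChar.inv_apply', ← map_pow]
  congr 1
  rcases eq_or_ne x 0 with rfl | hx
  · rw [inv_zero, zero_pow (by omega)]
  · refine (eq_inv_of_mul_eq_one_left ?_).symm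
    rw [← pow_succ, show 2 * Fintype.card F - 3 + 1 = (Fintype.card F - 1) * 2 by omega, pow_mul,
      FiniteField.pow_card_sub_one_eq_one x hx, one_pow]

theorem norm_sum_prod_mulChar_add_le [Fintype F] {ι : Type*} [Fintype ι] {ψ : ι → MulChar F ℂ}
    {κ : ι → F} {i₀ : ι} (hψ₀ : ψ i₀ ≠ 1) (hψ : ∀ i, ψ i = ψ i₀ ∨ ψ i = (ψ i₀)⁻¹)
    (hκ : ∀ i, i ≠ i₀ → κ i ≠ κ i₀) :
    ‖∑ x, ∏ i, ψ i (x + κ i)‖ ≤ Fintype.card ι * √(Fintype.card F) := by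
  classical
  obtain ⟨t, ht⟩ := exists_inv_mulChar_apply_eq_pow (ψ i₀)
  let s (i : ι) : ℕ := if ψ i = ψ i₀ then 1 else t
  have hs (i : ι) (x : F) : ψ i x = ψ i₀ x ^ s i := by
    simp only [s]
    split_ifs with hi
    · rw [hi, pow_one]
    · rw [(hψ i).resolve_left hi, ht]
  let e (α : F) : ℕ := ∑ i with κ i = α, s i
  have he : e (κ i₀) = 1 := by
    have hfilter : ({i | κ i = κ i₀} : Finset ι) = {i₀} := by
      ext i
      simp only [mem_filter, mem_univ, true_and, mem_singleton]
      exact ⟨fun hi ↦ not_imp_not.1 (hκ i) hi, congrArg κ⟩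
    simp only [e, hfilter, sum_singleton, s, if_true]
  have hsum : ∑ x, ∏ i, ψ i (x + κ i) = ∑ x, ∏ α ∈ univ.image κ, ψ i₀ (α - x) ^ e α := by
    refine Fintype.sum_equiv (Equiv.neg _) _ _ fun x ↦ ?_
    rw [← prod_fiberwise_of_maps_to fun i _ ↦ mem_image_of_mem κ (mem_univ i)]
    refine prod_congr rfl fun α _ ↦ ?_
    rw [← prod_pow_eq_pow_sum]
    refine prod_congr rfl fun i hi ↦ ?_
    rw [hs, (mem_filter.1 hi).2, Equiv.neg_apply, sub_neg_eq_add, add_comm]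
  rw [hsum]
  refine (norm_sum_prod_mulChar_pow_le hψ₀ (mem_image_of_mem κ (mem_univ i₀)) he).trans ?_
  gcongr
  exact card_image_le

theorem exists_comp_eq_of_card_image_le {ι α : Type*} [Fintype ι] [DecidableEq α]
    {κ : ι → α} {A : Finset α} (hA : A.Nonempty) (hκ : ∀ i, κ i ∈ A) {r : ℕ}
    (hr : #(univ.image κ) ≤ r) :
    ∃ (a : ι → Fin r) (b : Fin r → α), (∀ j, b j ∈ A) ∧ b ∘ a = κ := by
  obtain ⟨g⟩ := Function.Embedding.nonempty_of_card_le (α := univ.image κ) (β := Fin r)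
    (by rwa [Fintype.card_coe, Fintype.card_fin])
  obtain ⟨c, hc⟩ := hA
  let v (x : univ.image κ) : A := ⟨x, image_subset_iff.2 (fun i _ ↦ hκ i) x.2⟩
  let b : Fin r → A := Function.extend g v fun _ ↦ ⟨c, hc⟩
  refine ⟨fun i ↦ g ⟨κ i, mem_image_of_mem κ (mem_univ i)⟩, fun j ↦ b j, fun j ↦ (b j).2,
    funext fun i ↦ ?_⟩
  rw [Function.comp_apply, show b (g _) = v _ from g.injective.extend_apply v _ _]

theorem card_piFinset_filter_forall_exists_ne_le {ι α : Type*} [Fintype ι] [DecidableEq ι]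
    [DecidableEq α] {A : Finset α} (hA : A.Nonempty) {r : ℕ} (hι : Fintype.card ι = 2 * r) :
    #{κ ∈ Fintype.piFinset fun _ : ι ↦ A | ∀ i₀, ∃ i, i ≠ i₀ ∧ κ i = κ i₀} ≤
      r ^ (2 * r) * #A ^ r := by
  have hcard : r ^ (2 * r) * #A ^ r =
      #((univ : Finset (ι → Fin r)) ×ˢ Fintype.piFinset fun _ : Fin r ↦ A) := by
    simp [card_product, hι]
  rw [hcard]
  refine (card_le_card (t := image (fun ab ↦ ab.2 ∘ ab.1) _) fun κ hκ ↦ ?_).trans card_image_le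
  rw [mem_filter, Fintype.mem_piFinset] at hκ
  have himage : #(univ.image κ) * 2 ≤ 2 * r := by
    rw [← hι, ← card_univ, card_eq_sum_card_image κ univ, ← smul_eq_mul]
    refine card_nsmul_le_sum _ _ _ fun v hv ↦ ?_
    obtain ⟨i₀, -, rfl⟩ := mem_image.1 hv
    obtain ⟨i, hi, hκi⟩ := hκ.2 i₀
    exact one_lt_card.2 ⟨i, by simp [hκi], i₀, by simp, hi⟩
  obtain ⟨a, b, hb, hab⟩ := exists_comp_eq_of_card_image_le hA hκ.1 (r := r) (by omega)
  exact mem_image.2 ⟨(a, b), mem_product.2 ⟨mem_univ _, Fintype.mem_piFinset.2 hb⟩, hab⟩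

theorem norm_sum_pow_eq_sum_piFinset [Finite F] (χ : MulChar F ℂ) (A : Finset F) (r : ℕ) (x : F) :
    ((‖∑ a ∈ A, χ (x + a)‖ ^ (2 * r) : ℝ) : ℂ) =
      ∑ κ ∈ Fintype.piFinset fun _ : Fin r ⊕ Fin r ↦ A,
        ∏ i, Sum.elim (fun _ ↦ χ) (fun _ ↦ χ⁻¹) i (x + κ i) := by
  have hconj : ∑ a ∈ A, χ⁻¹ (x + a) = starRingEnd ℂ (∑ a ∈ A, χ (x + a)) := by
    rw [map_sum]
    exact sum_congr rfl fun a _ ↦ (MulChar.star_apply' χ (x + a)).symm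
  rw [← prod_univ_sum (fun _ ↦ A) fun i a ↦ Sum.elim (fun _ ↦ χ) (fun _ ↦ χ⁻¹) i (x + a),
    Fintype.prod_sum_type]
  simp only [Sum.elim_inl, Sum.elim_inr, prod_const, card_univ, Fintype.card_fin]
  rw [hconj, ← mul_pow, Complex.mul_conj, Complex.normSq_eq_norm_sq, pow_mul, Complex.ofReal_pow]

theorem sum_norm_sum_mulChar_pow_le [Fintype F] {χ : MulChar F ℂ} (hχ : χ ≠ 1) {A : Finset F}
    (hA : A.Nonempty) (r : ℕ) :
    ∑ x, ‖∑ a ∈ A, χ (x + a)‖ ^ (2 * r) ≤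
      r ^ (2 * r) * #A ^ r * Fintype.card F + 2 * r * #A ^ (2 * r) * √(Fintype.card F) := by
  classical
  have hι : Fintype.card (Fin r ⊕ Fin r) = 2 * r := by simp [two_mul]
  let ψ : Fin r ⊕ Fin r → MulChar F ℂ := Sum.elim (fun _ ↦ χ) (fun _ ↦ χ⁻¹)
  have hψ₀ (i) : ψ i ≠ 1 := by
    rcases i with _ | _
    · exact hχ
    · exact inv_ne_one.2 hχ
  have hψ (i₀ i) : ψ i = ψ i₀ ∨ ψ i = (ψ i₀)⁻¹ := by
    rcases i with i | i <;> rcases i₀ with j | j <;> simp [ψ]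
  have hexpand : ∑ x, ‖∑ a ∈ A, χ (x + a)‖ ^ (2 * r) ≤
      ∑ κ ∈ Fintype.piFinset fun _ : Fin r ⊕ Fin r ↦ A, ‖∑ x, ∏ i, ψ i (x + κ i)‖ := by
    refine le_trans (le_of_le_of_eq (le_abs_self _) ?_) (norm_sum_le _ _)
    rw [sum_comm, ← Real.norm_eq_abs, ← Complex.norm_real, Complex.ofReal_sum]
    simp only [norm_sum_pow_eq_sum_piFinset, ψ]
  refine hexpand.trans ?_
  rw [← sum_filter_add_sum_filter_not _ fun κ ↦ ∀ i₀, ∃ i, i ≠ i₀ ∧ κ i = κ i₀]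
  have htrivial (κ : Fin r ⊕ Fin r → F) : ‖∑ x, ∏ i, ψ i (x + κ i)‖ ≤ Fintype.card F := by
    refine (norm_sum_le _ _).trans ((sum_le_card_nsmul _ _ (1 : ℝ) fun x _ ↦ ?_).trans_eq ?_)
    · rw [norm_prod]
      exact prod_le_one (fun _ _ ↦ norm_nonneg _) fun _ _ ↦ norm_mulChar_le_one _ _
    · rw [nsmul_one, card_univ]
  refine add_le_add ?_ ?_
  · refine (sum_le_card_nsmul _ _ _ fun κ _ ↦ htrivial κ).trans ?_
    rw [nsmul_eq_mul]
    gcongr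
    exact_mod_cast card_piFinset_filter_forall_exists_ne_le hA hι
  · refine (sum_le_card_nsmul _ _ (2 * r * √(Fintype.card F)) fun κ hκ ↦ ?_).trans ?_
    · obtain ⟨i₀, hi₀⟩ := not_forall.1 (mem_filter.1 hκ).2
      refine (norm_sum_prod_mulChar_add_le (hψ₀ i₀) (hψ i₀)
        fun i hi h ↦ hi₀ ⟨i, hi, h⟩).trans_eq ?_
      rw [hι, Nat.cast_mul, Nat.cast_two]
    · have hcard := card_filter_le (Fintype.piFinset fun _ : Fin r ⊕ Fin r ↦ A)
        fun κ ↦ ¬∀ i₀, ∃ i, i ≠ i₀ ∧ κ i = κ i₀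
      rw [Fintype.card_piFinset, prod_const, card_univ, hι] at hcard
      rw [nsmul_eq_mul, mul_right_comm (2 * (r : ℝ)), mul_comm _ ((#A : ℝ) ^ (2 * r))]
      gcongr ?_ * _
      exact_mod_cast hcard

end Moment

section Energy

theorem card_le_of_dvd_sub_of_sub_le {T : Finset ℤ} {m D : ℕ} (hm : 0 < m)
    (hdvd : ∀ x ∈ T, ∀ y ∈ T, (m : ℤ) ∣ y - x) (hle : ∀ x ∈ T, ∀ y ∈ T, y - x ≤ D) :
    #T ≤ D / m + 1 := by
  rcases T.eq_empty_or_nonempty with rfl | hT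
  · exact Nat.zero_le _
  obtain ⟨x₀, hx₀, hmin⟩ := T.exists_min_image id hT
  have hsub : T ⊆ (range (D / m + 1)).image fun n : ℕ ↦ x₀ + m * n := by
    intro y hy
    obtain ⟨t, ht⟩ := hdvd x₀ hx₀ y hy
    have hmpos : (0 : ℤ) < m := by exact_mod_cast hm
    have ht₀ : 0 ≤ t := nonneg_of_mul_nonneg_right (ht ▸ sub_nonneg.2 (hmin y hy)) hmpos
    lift t to ℕ using ht₀
    have htD : m * t ≤ D := by exact_mod_cast ht ▸ hle x₀ hx₀ y hy
    rw [mul_comm, ← Nat.le_div_iff_mul_le hm] at htD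
    exact mem_image.2 ⟨t, mem_range_succ_iff.2 htD, by linarith⟩
  simpa only [card_range] using (card_le_card hsub).trans card_image_le

theorem card_filter_mul_sub_eq_le {a : ℕ} (ha : 0 < a) (B L : ℕ) (w : ℤ) :
    #{y ∈ range B ×ˢ range L | (a : ℤ) * y.1 - y.2 = w} ≤ L / a + 1 := by
  have hinj : Set.InjOn (fun y : ℕ × ℕ ↦ (y.2 : ℤ))
      ↑({y ∈ range B ×ˢ range L | (a : ℤ) * y.1 - y.2 = w}) := by
    intro y hy z hz hyz
    have hy' := (mem_filter.1 hy).2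
    have hz' := (mem_filter.1 hz).2
    simp only at hyz
    have hmul : (a : ℤ) * y.1 = a * z.1 := by linarith
    exact Prod.ext (by exact_mod_cast mul_left_cancel₀ (by positivity) hmul) (by exact_mod_cast hyz)
  rw [← card_image_of_injOn hinj]
  refine card_le_of_dvd_sub_of_sub_le ha (fun s hs t ht ↦ ?_) fun s hs t ht ↦ ?_
  all_goals
    obtain ⟨y, hy, rfl⟩ := mem_image.1 hs
    obtain ⟨z, hz, rfl⟩ := mem_image.1 ht
    simp only [mem_filter, mem_product, mem_range] at hy hz
  · exact ⟨z.1 - y.1, by linarith⟩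
  · lia

theorem mul_sub_mem_Ioc {A B L a : ℕ} (ha : a ≤ 2 * A) (hL : L ≤ A * B) {y : ℕ × ℕ}
    (hy : y ∈ range B ×ˢ range L) :
    (a : ℤ) * y.1 - y.2 ∈ Ioc (-(A * B : ℤ)) (2 * (A * B)) := by
  rw [mem_product, mem_range, mem_range] at hy
  have hay : a * y.1 ≤ 2 * (A * B) := by
    rw [← mul_assoc]
    exact Nat.mul_le_mul ha hy.1.le
  rw [mem_Ioc]
  zify at hay hL
  lia

theorem natCast_ne_zero_of_lt {p n : ℕ} (hn : 0 < n) (hnp : n < p) : (n : ZMod p) ≠ 0 := by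
  rw [Ne, ZMod.natCast_eq_zero_iff]
  exact Nat.not_dvd_of_pos_of_lt hn hnp

variable {p : ℕ} [Fact p.Prime]

/-- The parameter `(a (b₀ + β) - (v₀ + ν)) / (a h)` attached to `x = (a, h)` and `y = (β, ν)`.
Replacing `β` by `β + h k` adds `k` to it. -/
def shiftParam (b₀ v₀ : ZMod p) (x y : ℕ × ℕ) : ZMod p :=
  (x.1 * (b₀ + y.1) - (v₀ + y.2)) / (x.1 * x.2)

variable {b₀ v₀ : ZMod p} {A B L H : ℕ} {x x' : ℕ × ℕ}

/-- The box `[A, 2A) × [H, 2H)` of pairs `(a, h)`. -/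
def dyadicBox (A H : ℕ) : Finset (ℕ × ℕ) := Ico A (2 * A) ×ˢ Ico H (2 * H)

theorem mem_dyadicBox : x ∈ dyadicBox A H ↔ (A ≤ x.1 ∧ x.1 < 2 * A) ∧ H ≤ x.2 ∧ x.2 < 2 * H := by
  simp only [dyadicBox, mem_product, mem_Ico]

theorem card_dyadicBox (A H : ℕ) : #(dyadicBox A H) = A * H := by
  simp only [dyadicBox, card_product, Nat.card_Ico, two_mul, Nat.add_sub_cancel]

theorem mul_mem_Icc_of_mem_dyadicBox (hx : x ∈ dyadicBox A H) :
    x.1 * x.2 ∈ Icc (A * H) (4 * (A * H)) := by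
  obtain ⟨⟨hA, hA'⟩, hH, hH'⟩ := mem_dyadicBox.1 hx
  rw [mem_Icc, show 4 * (A * H) = 2 * A * (2 * H) by ring]
  exact ⟨Nat.mul_le_mul hA hH, Nat.mul_le_mul hA'.le hH'.le⟩

theorem natCast_mul_ne_zero_of_mem_dyadicBox (hA : 0 < A) (hH : 0 < H) (hAp : 2 * A ≤ p)
    (hHp : 2 * H ≤ p) (hx : x ∈ dyadicBox A H) : (x.1 * x.2 : ZMod p) ≠ 0 := by
  obtain ⟨⟨hAx, hxA⟩, hHx, hxH⟩ := mem_dyadicBox.1 hx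
  exact mul_ne_zero (natCast_ne_zero_of_lt (hA.trans_le hAx) (hxA.trans_le hAp))
    (natCast_ne_zero_of_lt (hH.trans_le hHx) (hxH.trans_le hHp))

theorem mul_sub_eq_mul_sub_of_shiftParam_eq (hA : 0 < A) (hH : 0 < H) (hHB : H ≤ B)
    (hL : L ≤ A * B) (hp : 24 * (A * B) ^ 2 < p) (hx : x ∈ dyadicBox A H)
    (hx' : x' ∈ dyadicBox A H) {y y' z z' : ℕ × ℕ} (hy : y ∈ range B ×ˢ range L)
    (hy' : y' ∈ range B ×ˢ range L) (hz : z ∈ range B ×ˢ range L) (hz' : z' ∈ range B ×ˢ range L)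
    (hyy' : shiftParam b₀ v₀ x y = shiftParam b₀ v₀ x' y')
    (hzz' : shiftParam b₀ v₀ x z = shiftParam b₀ v₀ x' z') :
    ((x'.1 * x'.2 : ℕ) : ℤ) * ((x.1 * z.1 - z.2) - (x.1 * y.1 - y.2)) =
      (x.1 * x.2 : ℕ) * ((x'.1 * z'.1 - z'.2) - (x'.1 * y'.1 - y'.2)) := by
  have hAB : A ≤ A * B := Nat.le_mul_of_pos_right A (by omega)
  have hBA : B ≤ A * B := Nat.le_mul_of_pos_left B hA
  have hsq : A * B ≤ (A * B) ^ 2 := Nat.le_self_pow two_ne_zero _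
  have hs (u) (hu : u ∈ dyadicBox A H) : ((u.1 * u.2 : ℕ) : ℤ) ≤ 4 * (A * B) := by
    exact_mod_cast (mem_Icc.1 (mul_mem_Icc_of_mem_dyadicBox hu)).2.trans
      (Nat.mul_le_mul_left 4 (Nat.mul_le_mul_left A hHB))
  have hdiff (u) (hu : u ∈ dyadicBox A H) {v w : ℕ × ℕ} (hv : v ∈ range B ×ˢ range L)
      (hw : w ∈ range B ×ˢ range L) :
      |((u.1 * w.1 - w.2) - (u.1 * v.1 - v.2) : ℤ)| ≤ 3 * (A * B) := by
    have hv' := mem_Ioc.1 (mul_sub_mem_Ioc (mem_dyadicBox.1 hu).1.2.le hL hv)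
    have hw' := mem_Ioc.1 (mul_sub_mem_Ioc (mem_dyadicBox.1 hu).1.2.le hL hw)
    rw [abs_le]
    constructor <;> linarith
  have hmod := natCast_mul_ne_zero_of_mem_dyadicBox (p := p) hA hH (by omega) (by omega) hx
  have hmod' := natCast_mul_ne_zero_of_mem_dyadicBox (p := p) hA hH (by omega) (by omega) hx'
  rw [shiftParam, shiftParam, div_eq_div_iff hmod hmod'] at hyy' hzz'
  rw [← sub_eq_zero]
  refine Int.eq_zero_of_abs_lt_dvd (m := p) ?_ ?_
  · rw [← ZMod.intCast_zmod_eq_zero_iff_dvd]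
    push_cast
    linear_combination hzz' - hyy'
  · refine (abs_sub _ _).trans_lt ?_
    rw [abs_mul, abs_mul, Nat.abs_cast, Nat.abs_cast]
    calc _ ≤ (4 * (A * B) : ℤ) * (3 * (A * B)) + 4 * (A * B) * (3 * (A * B)) := by
          gcongr
          exacts [hs x' hx', hdiff x hx hy hz, hs x hx, hdiff x' hx' hy' hz']
      _ = 24 * (A * B) ^ 2 := by ring
      _ < p := by exact_mod_cast hp

theorem natCast_div_gcd_dvd_of_mul_eq_mul {s s' : ℕ} (hs : 0 < s) {u v : ℤ}
    (h : (s' : ℤ) * u = s * v) : ((s / s.gcd s' : ℕ) : ℤ) ∣ u := by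
  have hg : 0 < s.gcd s' := Nat.gcd_pos_of_pos_left _ hs
  have hcop : IsCoprime ((s / s.gcd s' : ℕ) : ℤ) ((s' / s.gcd s' : ℕ) : ℤ) :=
    Nat.isCoprime_iff_coprime.2 (Nat.coprime_div_gcd_div_gcd hg)
  have hdiv : (s : ℤ) = s.gcd s' * (s / s.gcd s' : ℕ) := by
    exact_mod_cast (Nat.mul_div_cancel' (Nat.gcd_dvd_left s s')).symm
  have hdiv' : (s' : ℤ) = s.gcd s' * (s' / s.gcd s' : ℕ) := by
    exact_mod_cast (Nat.mul_div_cancel' (Nat.gcd_dvd_right s s')).symm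
  refine hcop.dvd_of_dvd_mul_left ⟨v, mul_left_cancel₀ (Nat.cast_ne_zero.2 hg.ne') ?_⟩
  rw [← mul_assoc, ← mul_assoc, ← hdiv, ← hdiv', h]

theorem card_shiftParam_eq_le (hA : 0 < A) (hH : 0 < H) (hHB : H ≤ B) (hL : L ≤ A * B)
    (hp : 24 * (A * B) ^ 2 < p) (hx : x ∈ dyadicBox A H) (hx' : x' ∈ dyadicBox A H) :
    #{yy ∈ (range B ×ˢ range L) ×ˢ (range B ×ˢ range L) |
        shiftParam b₀ v₀ x yy.1 = shiftParam b₀ v₀ x' yy.2} ≤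
      (L / A + 1) ^ 2 * (3 * (A * B) / (x.1 * x.2 / (x.1 * x.2).gcd (x'.1 * x'.2)) + 1) := by
  let Q := {yy ∈ (range B ×ˢ range L) ×ˢ (range B ×ˢ range L) |
    shiftParam b₀ v₀ x yy.1 = shiftParam b₀ v₀ x' yy.2}
  have hs : 0 < x.1 * x.2 :=
    (Nat.mul_pos hA hH).trans_le (mem_Icc.1 (mul_mem_Icc_of_mem_dyadicBox hx)).1
  let W (yy : (ℕ × ℕ) × (ℕ × ℕ)) : ℤ := x.1 * yy.1.1 - yy.1.2
  have hmem {y} (hy : y ∈ Q) := mem_product.1 (mem_filter.1 hy).1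
  have hW {y} (hy : y ∈ Q) := mem_Ioc.1 (mul_sub_mem_Ioc (mem_dyadicBox.1 hx).1.2.le hL (hmem hy).1)
  have hdiff {y z} (hy : y ∈ Q) (hz : z ∈ Q) :=
    mul_sub_eq_mul_sub_of_shiftParam_eq hA hH hHB hL hp hx hx' (hmem hy).1 (hmem hy).2 (hmem hz).1
      (hmem hz).2 (mem_filter.1 hy).2 (mem_filter.1 hz).2
  have himage : #(Q.image W) ≤
      3 * (A * B) / (x.1 * x.2 / (x.1 * x.2).gcd (x'.1 * x'.2)) + 1 := by
    refine card_le_of_dvd_sub_of_sub_le (Nat.div_gcd_pos_of_pos_left _ hs)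
      (fun s hs' t ht ↦ ?_) fun s hs' t ht ↦ ?_
    all_goals
      obtain ⟨y, hy, rfl⟩ := mem_image.1 hs'
      obtain ⟨z, hz, rfl⟩ := mem_image.1 ht
    · exact natCast_div_gcd_dvd_of_mul_eq_mul hs (hdiff hy hz)
    · push_cast
      linarith [(hW hy).1, (hW hz).2]
  have hfiber (w) (hw : w ∈ Q.image W) : #{y ∈ Q | W y = w} ≤ (L / A + 1) ^ 2 := by
    obtain ⟨u, hu, rfl⟩ := mem_image.1 hw
    have hsub : {y ∈ Q | W y = W u} ⊆
        {y ∈ range B ×ˢ range L | (x.1 : ℤ) * y.1 - y.2 = W u} ×ˢ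
          {y ∈ range B ×ˢ range L | (x'.1 : ℤ) * y.1 - y.2 = x'.1 * u.2.1 - u.2.2} := by
      intro y hy
      obtain ⟨hyQ, hyW⟩ := mem_filter.1 hy
      have h0 := hdiff hu hyQ
      rw [sub_eq_zero.2 hyW, mul_zero, zero_eq_mul, sub_eq_zero] at h0
      exact mem_product.2 ⟨mem_filter.2 ⟨(hmem hyQ).1, hyW⟩,
        mem_filter.2 ⟨(hmem hyQ).2, h0.resolve_left (Nat.cast_ne_zero.2 hs.ne')⟩⟩
    have hpair {a : ℕ} (ha : A ≤ a) (w : ℤ) :=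
      (card_filter_mul_sub_eq_le (hA.trans_le ha) B L w).trans
        (Nat.succ_le_succ (Nat.div_le_div_left ha hA))
    refine (card_le_card hsub).trans ?_
    rw [card_product, sq]
    exact Nat.mul_le_mul (hpair (mem_dyadicBox.1 hx).1.1 _) (hpair (mem_dyadicBox.1 hx').1.1 _)
  exact (card_le_mul_card_image Q _ hfiber).trans (Nat.mul_le_mul_left _ himage)

theorem sum_gcd_le_card_divisors_mul {s : ℕ} (hs : s ≠ 0) (M : ℕ) :
    ∑ t ∈ Icc 1 M, s.gcd t ≤ #s.divisors * M := by
  have hgcd (t : ℕ) : s.gcd t ≤ ∑ d ∈ s.divisors, if d ∣ t then d else 0 := by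
    have hmem : s.gcd t ∈ s.divisors := Nat.mem_divisors.2 ⟨Nat.gcd_dvd_left _ _, hs⟩
    simpa only [if_pos (Nat.gcd_dvd_right s t)] using
      single_le_sum (f := fun d ↦ if d ∣ t then d else 0) (fun _ _ ↦ Nat.zero_le _) hmem
  calc ∑ t ∈ Icc 1 M, s.gcd t
      ≤ ∑ t ∈ Icc 1 M, ∑ d ∈ s.divisors, if d ∣ t then d else 0 := sum_le_sum fun t _ ↦ hgcd t
    _ = ∑ d ∈ s.divisors, M / d * d := by
        rw [sum_comm]
        refine sum_congr rfl fun d _ ↦ ?_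
        rw [← sum_filter, sum_const, smul_eq_mul, ← Nat.Ioc_filter_dvd_card_eq_div]
        rfl
    _ ≤ #s.divisors * M := by
        rw [← smul_eq_mul]
        exact sum_le_card_nsmul _ _ _ fun d _ ↦ Nat.div_mul_le_self M d

theorem sum_comp_mul_le {P : Finset (ℕ × ℕ)} {M T : ℕ} (hP : ∀ x ∈ P, x.1 * x.2 ∈ Icc 1 M)
    (hT : ∀ s ∈ Icc 1 M, #s.divisors ≤ T) (f : ℕ → ℕ) :
    ∑ x ∈ P, f (x.1 * x.2) ≤ T * ∑ s ∈ Icc 1 M, f s := by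
  rw [← sum_fiberwise_of_maps_to hP, mul_sum]
  refine sum_le_sum fun s hs ↦ ?_
  have hfiber : #{x ∈ P | x.1 * x.2 = s} ≤ T := by
    have hs₀ : s ≠ 0 := Nat.pos_iff_ne_zero.1 (mem_Icc.1 hs).1
    refine le_trans (card_le_card (t := s.divisorsAntidiagonal) fun x hx ↦ ?_) ?_
    · exact Nat.mem_divisorsAntidiagonal.2 ⟨(mem_filter.1 hx).2, hs₀⟩
    · rw [← Nat.map_div_right_divisors, card_map]
      exact hT s hs
  calc ∑ x ∈ P with x.1 * x.2 = s, f (x.1 * x.2) = ∑ x ∈ P with x.1 * x.2 = s, f s :=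
        sum_congr rfl fun x hx ↦ by rw [(mem_filter.1 hx).2]
    _ ≤ T * f s := by
        rw [sum_const, smul_eq_mul]
        exact Nat.mul_le_mul_right _ hfiber

theorem sum_sum_gcd_mul_mul_le {P : Finset (ℕ × ℕ)} {M T : ℕ}
    (hP : ∀ x ∈ P, x.1 * x.2 ∈ Icc 1 M) (hT : ∀ s ∈ Icc 1 M, #s.divisors ≤ T) :
    ∑ x ∈ P, ∑ x' ∈ P, (x.1 * x.2).gcd (x'.1 * x'.2) ≤ T ^ 3 * M ^ 2 := by
  calc _ ≤ ∑ x ∈ P, T * ∑ t ∈ Icc 1 M, (x.1 * x.2).gcd t :=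
        sum_le_sum fun x _ ↦ sum_comp_mul_le hP hT fun t ↦ (x.1 * x.2).gcd t
    _ ≤ T * ∑ s ∈ Icc 1 M, T * ∑ t ∈ Icc 1 M, s.gcd t :=
        sum_comp_mul_le hP hT fun s ↦ T * ∑ t ∈ Icc 1 M, s.gcd t
    _ ≤ T * ∑ _s ∈ Icc 1 M, T * (T * M) := by
        gcongr with s hs
        exact (sum_gcd_le_card_divisors_mul (Nat.pos_iff_ne_zero.1 (mem_Icc.1 hs).1) M).trans
          (Nat.mul_le_mul_right _ (hT s hs))
    _ = T ^ 3 * M ^ 2 := by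
        rw [sum_const, Nat.card_Icc, smul_eq_mul, Nat.add_sub_cancel]
        ring

theorem card_shiftParam_eq_le_mul_gcd (hA : 0 < A) (hH : 0 < H) (hHB : H ≤ B) (hL : L ≤ A * B)
    (hp : 24 * (A * B) ^ 2 < p) (hx : x ∈ dyadicBox A H) (hx' : x' ∈ dyadicBox A H) :
    (#{yy ∈ (range B ×ˢ range L) ×ˢ (range B ×ˢ range L) |
        shiftParam b₀ v₀ x yy.1 = shiftParam b₀ v₀ x' yy.2} : ℝ) ≤
      (L / A + 1) ^ 2 * (4 * B / H) * (x.1 * x.2).gcd (x'.1 * x'.2) := by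
  have hcard := card_shiftParam_eq_le (b₀ := b₀) (v₀ := v₀) hA hH hHB hL hp hx hx'
  set s := x.1 * x.2
  set g := s.gcd (x'.1 * x'.2)
  have hAHs : A * H ≤ s := (mem_Icc.1 (mul_mem_Icc_of_mem_dyadicBox hx)).1
  have hs : 0 < s := (Nat.mul_pos hA hH).trans_le hAHs
  have hg : 0 < g := Nat.gcd_pos_of_pos_left _ hs
  have hquot : ((3 * (A * B) / (s / g) : ℕ) : ℝ) ≤ 3 * (B / H) * g := by
    refine Nat.cast_div_le.trans ?_
    rw [Nat.cast_div (Nat.gcd_dvd_left _ _) (by positivity), div_div_eq_mul_div,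
      div_le_iff₀ (by positivity)]
    calc ((3 * (A * B) : ℕ) : ℝ) * g = 3 * (B / H) * g * (A * H : ℕ) := by
          push_cast
          field_simp
      _ ≤ 3 * (B / H) * g * s := by gcongr
  have hone : (1 : ℝ) ≤ B / H * g := by
    refine one_le_mul_of_one_le_of_one_le ?_ (by exact_mod_cast hg)
    rw [one_le_div (by positivity)]
    exact_mod_cast hHB
  calc _ ≤ (((L / A : ℕ) : ℝ) + 1) ^ 2 * ((3 * (A * B) / (s / g) : ℕ) + 1) := by
        exact_mod_cast hcard
    _ ≤ ((L : ℝ) / A + 1) ^ 2 * (3 * (B / H) * g + B / H * g) := by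
        gcongr
        exact Nat.cast_div_le
    _ = _ := by ring

theorem sum_sum_card_shiftParam_eq_le {T : ℕ} (b₀ v₀ : ZMod p) (hA : 0 < A) (hH : 0 < H)
    (hHB : H ≤ B) (hL : L ≤ A * B) (hp : 24 * (A * B) ^ 2 < p)
    (hT : ∀ s ∈ Icc 1 (4 * (A * H)), #s.divisors ≤ T) :
    ∑ x ∈ dyadicBox A H, ∑ x' ∈ dyadicBox A H,
        (#{yy ∈ (range B ×ˢ range L) ×ˢ (range B ×ˢ range L) |
          shiftParam b₀ v₀ x yy.1 = shiftParam b₀ v₀ x' yy.2} : ℝ) ≤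
      64 * T ^ 3 * (L + A) ^ 2 * B * H := by
  have hbox (x) (hx : x ∈ dyadicBox A H) : x.1 * x.2 ∈ Icc 1 (4 * (A * H)) := by
    have := mem_Icc.1 (mul_mem_Icc_of_mem_dyadicBox hx)
    exact mem_Icc.2 ⟨(Nat.mul_pos hA hH).trans_le this.1, this.2⟩
  calc _ ≤ ∑ x ∈ dyadicBox A H, ∑ x' ∈ dyadicBox A H,
          ((L : ℝ) / A + 1) ^ 2 * (4 * B / H) * (x.1 * x.2).gcd (x'.1 * x'.2) :=
        sum_le_sum fun x hx ↦ sum_le_sum fun x' hx' ↦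
          card_shiftParam_eq_le_mul_gcd hA hH hHB hL hp hx hx'
    _ = ((L : ℝ) / A + 1) ^ 2 * (4 * B / H) *
          (∑ x ∈ dyadicBox A H, ∑ x' ∈ dyadicBox A H, (x.1 * x.2).gcd (x'.1 * x'.2) : ℕ) := by
        push_cast
        simp only [mul_sum]
    _ ≤ ((L : ℝ) / A + 1) ^ 2 * (4 * B / H) * (T ^ 3 * (4 * (A * H)) ^ 2 : ℕ) := by
        gcongr
        exact sum_sum_gcd_mul_mul_le hbox hT
    _ = 64 * T ^ 3 * (L + A) ^ 2 * B * H := by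
        push_cast
        field_simp
        ring

end Energy

section ShortSums

theorem norm_sum_range_sub_sum_range_add_le {E : Type*} [SeminormedAddCommGroup E] {f : ℕ → E}
    (hf : ∀ n, ‖f n‖ ≤ 1) (B m : ℕ) :
    ‖∑ β ∈ range B, f β - ∑ β ∈ range B, f (β + m)‖ ≤ 2 * m := by
  have htelescope : ∑ β ∈ range B, f β - ∑ β ∈ range B, f (β + m) =
      ∑ β ∈ range m, f β - ∑ β ∈ range m, f (B + β) := by
    rw [sub_eq_sub_iff_add_eq_add, ← sum_range_add, add_comm B, sum_range_add]
    simp only [add_comm m]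
  have hrange (g : ℕ → ℕ) : ‖∑ β ∈ range m, f (g β)‖ ≤ m := by
    simpa only [sum_const, card_range, nsmul_one] using
      norm_sum_le_of_le (range m) fun β _ ↦ hf (g β)
  rw [htelescope, two_mul]
  exact (norm_sub_le _ _).trans (add_le_add (hrange id) (hrange (B + ·)))

theorem sum_comp_pow_le {ι G : Type*} [Fintype G] [DecidableEq G] (S : Finset ι) (g : ι → G)
    {f : G → ℝ} (hf : ∀ x, 0 ≤ f x) {r : ℕ} (hr : r ≠ 0) :
    (∑ t ∈ S, f (g t)) ^ (2 * r) ≤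
      (#S : ℝ) ^ (2 * r - 2) * #{tt ∈ S ×ˢ S | g tt.1 = g tt.2} * ∑ x, f x ^ (2 * r) := by
  obtain ⟨n, rfl⟩ := Nat.exists_eq_succ_of_ne_zero hr
  have hfiber : ∑ t ∈ S, f (g t) ^ (n + 1) = ∑ x, (#{t ∈ S | g t = x} : ℝ) * f x ^ (n + 1) := by
    rw [← sum_fiberwise S g]
    refine sum_congr rfl fun x _ ↦ ?_
    rw [sum_congr rfl fun t ht ↦ by rw [(mem_filter.1 ht).2], sum_const, nsmul_eq_mul]
  have henergy : ∑ x, (#{t ∈ S | g t = x} : ℝ) ^ 2 = #{tt ∈ S ×ˢ S | g tt.1 = g tt.2} := by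
    simp only [card_filter, sum_product, Nat.cast_sum, sq, sum_mul_sum]
    rw [sum_comm]
    refine sum_congr rfl fun t _ ↦ ?_
    rw [sum_comm]
    simp [eq_comm]
  have hcauchy : (∑ t ∈ S, f (g t) ^ (n + 1)) ^ 2 ≤
      #{tt ∈ S ×ˢ S | g tt.1 = g tt.2} * ∑ x, f x ^ (2 * (n + 1)) := by
    rw [hfiber, ← henergy]
    refine (sum_mul_sq_le_sq_mul_sq _ _ _).trans_eq ?_
    simp only [← pow_mul, mul_comm]
  calc (∑ t ∈ S, f (g t)) ^ (2 * (n + 1)) = ((∑ t ∈ S, f (g t)) ^ (n + 1)) ^ 2 := by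
        rw [← pow_mul, mul_comm]
    _ ≤ ((#S : ℝ) ^ n * ∑ t ∈ S, f (g t) ^ (n + 1)) ^ 2 := by
        have h0 : 0 ≤ ∑ t ∈ S, f (g t) := sum_nonneg fun t _ ↦ hf _
        gcongr
        exact pow_sum_le_card_mul_sum_pow (fun t _ ↦ hf _) n
    _ = (#S : ℝ) ^ (2 * (n + 1) - 2) * (∑ t ∈ S, f (g t) ^ (n + 1)) ^ 2 := by
        rw [mul_pow, ← pow_mul, mul_comm n, mul_add_one 2 n, Nat.add_sub_cancel]
    _ ≤ _ := by
        rw [mul_assoc]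
        gcongr

variable {p : ℕ} [Fact p.Prime] {χ : MulChar (ZMod p) ℂ} {A B L H K T r : ℕ}

theorem mulChar_add_mul_eq (χ : MulChar (ZMod p) ℂ) (b₀ v₀ : ZMod p) {x : ℕ × ℕ}
    (hx : (x.1 * x.2 : ZMod p) ≠ 0) (β ν k : ℕ) :
    χ (x.1 * (b₀ + (β + x.2 * k : ℕ)) - (v₀ + ν)) =
      χ (x.1 * x.2) * χ (shiftParam b₀ v₀ x (β, ν) + k) := by
  rw [← map_mul, shiftParam, mul_add (x.1 * x.2 : ZMod p), mul_div_cancel₀ _ hx]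
  push_cast
  ring_nf

theorem mul_norm_sum_mulChar_le (χ : MulChar (ZMod p) ℂ) (b₀ v₀ : ZMod p) {x : ℕ × ℕ}
    (hx : (x.1 * x.2 : ZMod p) ≠ 0) (B ν K : ℕ) :
    K * ‖∑ β ∈ range B, χ (x.1 * (b₀ + β) - (v₀ + ν))‖ ≤
      ∑ β ∈ range B, ‖∑ k ∈ range K, χ (shiftParam b₀ v₀ x (β, ν) + k)‖ +
        2 * x.2 * K ^ 2 := by
  let f (β : ℕ) : ℂ := χ (x.1 * (b₀ + β) - (v₀ + ν))
  have hshift (β : ℕ) : ‖∑ k ∈ range K, f (β + x.2 * k)‖ ≤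
      ‖∑ k ∈ range K, χ (shiftParam b₀ v₀ x (β, ν) + k)‖ := by
    simp only [f, mulChar_add_mul_eq χ b₀ v₀ hx, ← mul_sum, norm_mul]
    exact mul_le_of_le_one_left (norm_nonneg _) (norm_mulChar_le_one χ _)
  have herror (k) (hk : k ∈ range K) :
      ‖∑ β ∈ range B, f β - ∑ β ∈ range B, f (β + x.2 * k)‖ ≤ 2 * x.2 * K := by
    refine (norm_sum_range_sub_sum_range_add_le (fun n ↦ norm_mulChar_le_one χ _) B _).trans ?_
    rw [Nat.cast_mul, ← mul_assoc]
    gcongr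
    exact (mem_range.1 hk).le
  have hsplit : (K : ℂ) * ∑ β ∈ range B, f β = ∑ β ∈ range B, ∑ k ∈ range K, f (β + x.2 * k) +
      ∑ k ∈ range K, (∑ β ∈ range B, f β - ∑ β ∈ range B, f (β + x.2 * k)) := by
    rw [sum_comm, sum_sub_distrib, sum_const, card_range, nsmul_eq_mul, add_sub_cancel]
  have hnorm : K * ‖∑ β ∈ range B, f β‖ = ‖(K : ℂ) * ∑ β ∈ range B, f β‖ := by
    rw [norm_mul, Complex.norm_natCast]
  refine hnorm.trans_le ?_
  rw [hsplit]
  refine (norm_add_le _ _).trans (add_le_add (norm_sum_le_of_le _ fun β _ ↦ hshift β) ?_)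
  refine (norm_sum_le_of_le _ herror).trans_eq ?_
  rw [sum_const, card_range, nsmul_eq_mul]
  ring

/-- The sum of `|∑ χ(a b - v)|` over `a ∈ [A, 2A)` and `v ∈ [v₀, v₀ + L)`, where the inner sum is
over `b ∈ [b₀, b₀ + B)`: the short sums to which the Burgess argument applies. -/
noncomputable def shortSum (χ : MulChar (ZMod p) ℂ) (b₀ v₀ : ZMod p) (A B L : ℕ) : ℝ :=
  ∑ a ∈ Ico A (2 * A), ∑ ν ∈ range L, ‖∑ β ∈ range B, χ (a * (b₀ + β) - (v₀ + ν))‖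

/-- The sum over `(a, h)` in a dyadic box and `(β, ν) ∈ [0, B) × [0, L)` of the short character
sums started at the corresponding `shiftParam`. -/
noncomputable def shiftedSum (χ : MulChar (ZMod p) ℂ) (b₀ v₀ : ZMod p) (A B L H K : ℕ) : ℝ :=
  ∑ t ∈ dyadicBox A H ×ˢ (range B ×ˢ range L),
    ‖∑ k ∈ range K, χ (shiftParam b₀ v₀ t.1 t.2 + k)‖

theorem mul_shortSum_le (χ : MulChar (ZMod p) ℂ) (b₀ v₀ : ZMod p) (hA : 0 < A) (hH : 0 < H)
    (hAp : 2 * A ≤ p) (hHp : 2 * H ≤ p) (B L K : ℕ) :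
    H * K * shortSum χ b₀ v₀ A B L ≤
      shiftedSum χ b₀ v₀ A B L H K + 4 * A * L * H ^ 2 * K ^ 2 := by
  have hlhs : H * K * shortSum χ b₀ v₀ A B L = ∑ x ∈ dyadicBox A H, ∑ ν ∈ range L,
      K * ‖∑ β ∈ range B, χ (x.1 * (b₀ + β) - (v₀ + ν))‖ := by
    simp only [dyadicBox, sum_product, sum_const, Nat.card_Ico, two_mul, Nat.add_sub_cancel,
      nsmul_eq_mul, shortSum, mul_sum, mul_assoc]
  have hrhs : shiftedSum χ b₀ v₀ A B L H K = ∑ x ∈ dyadicBox A H, ∑ ν ∈ range L,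
      ∑ β ∈ range B, ‖∑ k ∈ range K, χ (shiftParam b₀ v₀ x (β, ν) + k)‖ := by
    rw [shiftedSum, sum_product]
    refine sum_congr rfl fun x _ ↦ ?_
    rw [sum_product, sum_comm]
  have herror : (4 * A * L * H ^ 2 * K ^ 2 : ℝ) =
      ∑ x ∈ dyadicBox A H, ∑ ν ∈ range L, 2 * (2 * H) * (K : ℝ) ^ 2 := by
    rw [sum_const, sum_const, card_dyadicBox, card_range, nsmul_eq_mul, nsmul_eq_mul, Nat.cast_mul]
    ring
  rw [hlhs, hrhs, herror, ← sum_add_distrib]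
  refine sum_le_sum fun x hx ↦ ?_
  rw [← sum_add_distrib]
  refine sum_le_sum fun ν _ ↦ ?_
  refine (mul_norm_sum_mulChar_le χ b₀ v₀
    (natCast_mul_ne_zero_of_mem_dyadicBox hA hH hAp hHp hx) B ν K).trans ?_
  gcongr
  exact_mod_cast (mem_dyadicBox.1 hx).2.2.le

theorem sum_norm_sum_range_mulChar_pow_le (hχ : χ ≠ 1) (hK : 0 < K) (hKp : K ≤ p) (r : ℕ) :
    ∑ x, ‖∑ k ∈ range K, χ (x + k)‖ ^ (2 * r) ≤
      r ^ (2 * r) * K ^ r * p + 2 * r * K ^ (2 * r) * √p := by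
  have hinj : Set.InjOn (Nat.cast : ℕ → ZMod p) (range K) := by
    intro k hk l hl hkl
    rw [coe_range, Set.mem_Iio] at hk hl
    rwa [ZMod.natCast_eq_natCast_iff', Nat.mod_eq_of_lt (hk.trans_le hKp),
      Nat.mod_eq_of_lt (hl.trans_le hKp)] at hkl
  have hA : ((range K).image (Nat.cast : ℕ → ZMod p)).Nonempty :=
    (nonempty_range_iff.2 hK.ne').image _
  simpa only [sum_image hinj, card_image_of_injOn hinj, card_range, ZMod.card] using
    sum_norm_sum_mulChar_pow_le hχ hA r

theorem shiftedSum_pow_le (hχ : χ ≠ 1) (b₀ v₀ : ZMod p) (hA : 0 < A) (hH : 0 < H) (hHB : H ≤ B)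
    (hL : L ≤ A * B) (hp : 24 * (A * B) ^ 2 < p) (hT : ∀ s ∈ Icc 1 (4 * (A * H)), #s.divisors ≤ T)
    (hK : 0 < K) (hKp : K ≤ p) (hr : r ≠ 0) :
    shiftedSum χ b₀ v₀ A B L H K ^ (2 * r) ≤
      ((A : ℝ) * B * L * H) ^ (2 * r - 2) * (64 * T ^ 3 * (L + A) ^ 2 * B * H) *
        (r ^ (2 * r) * K ^ r * p + 2 * r * K ^ (2 * r) * √p) := by
  let S := dyadicBox A H ×ˢ (range B ×ˢ range L)
  have hcard : (#S : ℝ) = A * B * L * H := by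
    simp only [S, card_product, card_dyadicBox, card_range]
    push_cast
    ring
  have henergy : (#{tt ∈ S ×ˢ S | shiftParam b₀ v₀ tt.1.1 tt.1.2 =
      shiftParam b₀ v₀ tt.2.1 tt.2.2} : ℝ) ≤ 64 * T ^ 3 * (L + A) ^ 2 * B * H := by
    refine le_of_eq_of_le ?_ (sum_sum_card_shiftParam_eq_le b₀ v₀ hA hH hHB hL hp hT)
    simp only [S, card_filter, sum_product (dyadicBox A H), sum_product (range B ×ˢ range L),
      sum_product (dyadicBox A H ×ˢ range B ×ˢ range L), Nat.cast_sum]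
    exact sum_congr rfl fun x _ ↦ sum_comm
  rw [← hcard]
  refine (sum_comp_pow_le S (fun t ↦ shiftParam b₀ v₀ t.1 t.2)
    (f := fun x ↦ ‖∑ k ∈ range K, χ (x + k)‖) (fun _ ↦ norm_nonneg _) hr).trans ?_
  gcongr
  exact sum_norm_sum_range_mulChar_pow_le hχ hK hKp r

end ShortSums

section DivisorBound

theorem natCast_rpow_eq_prod_primeFactors {n : ℕ} (hn : n ≠ 0) (ε : ℝ) :
    (n : ℝ) ^ ε = ∏ q ∈ n.primeFactors, ((q : ℝ) ^ ε) ^ n.factorization q := by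
  conv_lhs => rw [← Nat.prod_factorization_pow_eq_self hn]
  rw [Finsupp.prod, Nat.support_factorization, Nat.cast_prod,
    ← Real.finsetProd_rpow _ _ fun q _ ↦ Nat.cast_nonneg _]
  refine prod_congr rfl fun q _ ↦ ?_
  rw [Nat.cast_pow, Real.rpow_pow_comm (Nat.cast_nonneg q)]

theorem natCast_add_one_le_mul_rpow_pow {ε x : ℝ} (hε : 0 < ε) (hx : 2 ≤ x) (v : ℕ) :
    (v + 1 : ℝ) ≤ max 1 (ε * Real.log 2)⁻¹ * (x ^ ε) ^ v := by
  have hs : 0 < ε * Real.log 2 := mul_pos hε (Real.log_pos one_lt_two)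
  set s := ε * Real.log 2
  have hpow : 1 + v * s ≤ (x ^ ε) ^ v :=
    calc 1 + v * s ≤ (1 + s) ^ v := one_add_mul_le_pow (by linarith) v
      _ ≤ (2 ^ ε) ^ v := by
        rw [Real.rpow_def_of_pos two_pos, mul_comm, add_comm]
        gcongr
        exact Real.add_one_le_exp s
      _ ≤ (x ^ ε) ^ v := by gcongr
  calc (v + 1 : ℝ) = v * (s⁻¹ * s) + 1 := by rw [inv_mul_cancel₀ hs.ne', mul_one]
    _ ≤ v * (max 1 s⁻¹ * s) + max 1 s⁻¹ := by gcongr <;> simp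
    _ = max 1 s⁻¹ * (1 + v * s) := by ring
    _ ≤ max 1 s⁻¹ * (x ^ ε) ^ v := by gcongr

theorem natCast_add_one_le_rpow_pow {ε x : ℝ} (hε : 0 < ε) (hx : 2 ^ ε⁻¹ ≤ x) (v : ℕ) :
    (v + 1 : ℝ) ≤ (x ^ ε) ^ v :=
  calc (v + 1 : ℝ) ≤ 2 ^ v := by exact_mod_cast Nat.lt_two_pow_self
    _ = (((2 : ℝ) ^ ε⁻¹) ^ ε) ^ v := by rw [Real.rpow_inv_rpow two_pos.le hε.ne']
    _ ≤ (x ^ ε) ^ v := by gcongr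

theorem exists_card_divisors_le_mul_rpow {ε : ℝ} (hε : 0 < ε) :
    ∃ C : ℝ, 1 ≤ C ∧ ∀ n : ℕ, (#n.divisors : ℝ) ≤ C * (n : ℝ) ^ ε := by
  let P := ⌈(2 : ℝ) ^ ε⁻¹⌉₊
  let c := max 1 (ε * Real.log 2)⁻¹
  let g (q : ℕ) : ℝ := if q < P then c else 1
  have hc : 1 ≤ c := le_max_left _ _
  refine ⟨c ^ P, one_le_pow₀ hc, fun n ↦ ?_⟩
  obtain rfl | hn := eq_or_ne n 0
  · rw [Nat.divisors_zero, card_empty, Nat.cast_zero]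
    positivity
  have hlocal (q) (hq : q ∈ n.primeFactors) :
      (n.factorization q + 1 : ℝ) ≤ g q * ((q : ℝ) ^ ε) ^ n.factorization q := by
    simp only [g]
    split_ifs with hqP
    · have hq2 : (2 : ℝ) ≤ q := by exact_mod_cast (Nat.prime_of_mem_primeFactors hq).two_le
      exact natCast_add_one_le_mul_rpow_pow hε hq2 _
    · rw [one_mul]
      exact natCast_add_one_le_rpow_pow hε
        ((Nat.le_ceil _).trans (Nat.cast_le.2 (not_lt.1 hqP))) _
  have hg : ∏ q ∈ n.primeFactors, g q ≤ c ^ P := by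
    rw [prod_ite, prod_const, prod_const_one, mul_one]
    refine pow_le_pow_right₀ hc ((card_le_card fun q hq ↦ ?_).trans_eq (card_range P))
    exact mem_range.2 (mem_filter.1 hq).2
  calc (#n.divisors : ℝ) = ∏ q ∈ n.primeFactors, (n.factorization q + 1 : ℝ) := by
        rw [Nat.card_divisors hn, Nat.cast_prod]
        push_cast
        rfl
    _ ≤ ∏ q ∈ n.primeFactors, g q * ((q : ℝ) ^ ε) ^ n.factorization q :=
        prod_le_prod (fun q _ ↦ by positivity) hlocal
    _ = (∏ q ∈ n.primeFactors, g q) * (n : ℝ) ^ ε := by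
        rw [prod_mul_distrib, natCast_rpow_eq_prod_primeFactors hn]
    _ ≤ c ^ P * (n : ℝ) ^ ε := by gcongr

end DivisorBound

section BurgessBound

variable {p : ℕ} {A B L H K T r : ℕ} {C y t : ℝ}

/-- The constant in the Burgess bound obtained from `2 r`-th moments when the number of divisors is
at most `C` times a small power of `p`. -/
def burgessConst (C : ℝ) (r : ℕ) : ℝ := 512 * C ^ 3 * (r ^ (2 * r) * 2 ^ r + 2 * r)

theorem one_le_burgessConst (hC : 1 ≤ C) (hr : r ≠ 0) : 1 ≤ burgessConst C r := by
  have hr1 : (1 : ℝ) ≤ r := by exact_mod_cast Nat.one_le_iff_ne_zero.2 hr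
  have hC3 : 1 ≤ C ^ 3 := one_le_pow₀ hC
  have hpow : (0 : ℝ) ≤ r ^ (2 * r) * 2 ^ r := by positivity
  exact one_le_mul_of_one_le_of_one_le (by linarith) (by linarith)

theorem moment_bound_le {q k : ℝ} (hq : 0 ≤ q) (hk : 0 ≤ k) (h : √q ≤ (2 * k) ^ r) :
    r ^ (2 * r) * k ^ r * q + 2 * r * k ^ (2 * r) * √q ≤
      (r ^ (2 * r) * 2 ^ r + 2 * r) * k ^ (2 * r) * √q :=
  calc r ^ (2 * r) * k ^ r * q + 2 * r * k ^ (2 * r) * √q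
      = r ^ (2 * r) * k ^ r * (√q * √q) + 2 * r * k ^ (2 * r) * √q := by
        rw [Real.mul_self_sqrt hq]
    _ ≤ r ^ (2 * r) * k ^ r * ((2 * k) ^ r * √q) + 2 * r * k ^ (2 * r) * √q := by gcongr
    _ = (r ^ (2 * r) * 2 ^ r + 2 * r) * k ^ (2 * r) * √q := by
        rw [mul_pow 2 k, two_mul r, pow_add k]
        ring

theorem energy_bound_mul_le {a b l h τ s : ℝ} (hb : 0 ≤ b) (hh : 0 ≤ h) (hτ : 0 ≤ τ) (hs : 0 ≤ s)
    (hC : 0 ≤ C) (hy : 0 ≤ y) (hτy : τ ≤ C * y) (hby : b ≤ 2 * h * y ^ 2)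
    (hab : s * y ^ 10 ≤ (a * b) ^ 2) (hbl : s * y ^ 10 ≤ (b * l) ^ 2) :
    64 * τ ^ 3 * (l + a) ^ 2 * b * h * s * y ^ 5 ≤ 512 * C ^ 3 * (a * b * l * h) ^ 2 := by
  have hla : (l + a) ^ 2 * (s * y ^ 10) ≤ 4 * (a * b * l) ^ 2 :=
    calc (l + a) ^ 2 * (s * y ^ 10) ≤ 2 * (l ^ 2 + a ^ 2) * (s * y ^ 10) := by
          gcongr
          exact add_sq_le
      _ = 2 * (l ^ 2 * (s * y ^ 10) + a ^ 2 * (s * y ^ 10)) := by ring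
      _ ≤ 2 * (l ^ 2 * (a * b) ^ 2 + a ^ 2 * (b * l) ^ 2) := by gcongr
      _ = 4 * (a * b * l) ^ 2 := by ring
  calc 64 * τ ^ 3 * (l + a) ^ 2 * b * h * s * y ^ 5
      ≤ 64 * (C * y) ^ 3 * (l + a) ^ 2 * (2 * h * y ^ 2) * h * s * y ^ 5 := by gcongr
    _ = 128 * C ^ 3 * h ^ 2 * ((l + a) ^ 2 * (s * y ^ 10)) := by ring
    _ ≤ 128 * C ^ 3 * h ^ 2 * (4 * (a * b * l) ^ 2) := by gcongr
    _ = 512 * C ^ 3 * (a * b * l * h) ^ 2 := by ring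

variable [Fact p.Prime] {χ : MulChar (ZMod p) ℂ}

theorem shiftedSum_le (hχ : χ ≠ 1) (b₀ v₀ : ZMod p) (hA : 0 < A) (hH : 0 < H) (hHB : H ≤ B)
    (hL : L ≤ A * B) (hp : 24 * (A * B) ^ 2 < p) (hT : ∀ s ∈ Icc 1 (4 * (A * H)), #s.divisors ≤ T)
    (hK : 0 < K) (hKp : K ≤ p) (hr : r ≠ 0) (hC : 1 ≤ C) (hy : 0 < y) (ht : 0 ≤ t)
    (hTy : T ≤ C * y) (hBy : B ≤ 2 * H * y ^ 2) (hKr : √p ≤ (2 * K) ^ r)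
    (hAB : √p * y ^ 10 ≤ (A * B : ℝ) ^ 2) (hBL : √p * y ^ 10 ≤ (B * L : ℝ) ^ 2)
    (hyt : (y ^ 5)⁻¹ ≤ t ^ (2 * r)) :
    shiftedSum χ b₀ v₀ A B L H K ≤ burgessConst C r * (A * B * L * H) * K * t := by
  have hconst := one_le_burgessConst hC hr
  have henergy : 64 * (T : ℝ) ^ 3 * (L + A) ^ 2 * B * H * √p ≤
      512 * C ^ 3 * (A * B * L * H) ^ 2 * t ^ (2 * r) :=
    calc _ ≤ 512 * C ^ 3 * (A * B * L * H) ^ 2 * (y ^ 5)⁻¹ := by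
          rw [← div_eq_mul_inv, le_div_iff₀ (pow_pos hy 5)]
          exact energy_bound_mul_le (by positivity) (by positivity) (by positivity) (by positivity)
            (by positivity) hy.le hTy hBy hAB hBL
      _ ≤ _ := by gcongr
  refine le_of_pow_le_pow_left₀ (n := 2 * r) (by lia) (by positivity) ?_
  calc shiftedSum χ b₀ v₀ A B L H K ^ (2 * r)
      ≤ ((A : ℝ) * B * L * H) ^ (2 * r - 2) * (64 * T ^ 3 * (L + A) ^ 2 * B * H) *
          (r ^ (2 * r) * K ^ r * p + 2 * r * K ^ (2 * r) * √p) :=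
        shiftedSum_pow_le hχ b₀ v₀ hA hH hHB hL hp hT hK hKp hr
    _ ≤ (A * B * L * H) ^ (2 * r - 2) * (64 * T ^ 3 * (L + A) ^ 2 * B * H) *
          ((r ^ (2 * r) * 2 ^ r + 2 * r) * K ^ (2 * r) * √p) := by
        gcongr
        exact moment_bound_le p.cast_nonneg K.cast_nonneg hKr
    _ = (A * B * L * H) ^ (2 * r - 2) * (64 * T ^ 3 * (L + A) ^ 2 * B * H * √p) *
          ((r ^ (2 * r) * 2 ^ r + 2 * r) * K ^ (2 * r)) := by ring
    _ ≤ (A * B * L * H) ^ (2 * r - 2) * (512 * C ^ 3 * (A * B * L * H) ^ 2 * t ^ (2 * r)) *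
          ((r ^ (2 * r) * 2 ^ r + 2 * r) * K ^ (2 * r)) := by gcongr
    _ = burgessConst C r * ((A * B * L * H) ^ (2 * r - 2) * (A * B * L * H) ^ 2) *
          K ^ (2 * r) * t ^ (2 * r) := by
        rw [burgessConst]
        ring
    _ ≤ burgessConst C r ^ (2 * r) * (A * B * L * H) ^ (2 * r) * K ^ (2 * r) * t ^ (2 * r) := by
        rw [← pow_add, Nat.sub_add_cancel (by lia)]
        gcongr
        exact le_self_pow₀ hconst (by lia)
    _ = (burgessConst C r * (A * B * L * H) * K * t) ^ (2 * r) := by simp only [mul_pow]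

theorem shortSum_le_of_shiftedSum_le (b₀ v₀ : ZMod p) (hA : 0 < A) (hH : 0 < H) (hK : 0 < K)
    (hAp : 2 * A ≤ p) (hHp : 2 * H ≤ p) (hHK : H * K ≤ B * t)
    (h : shiftedSum χ b₀ v₀ A B L H K ≤ C * (A * B * L * H) * K * t) :
    shortSum χ b₀ v₀ A B L ≤ (C + 4) * A * B * L * t := by
  refine le_of_mul_le_mul_left ?_ (show (0 : ℝ) < H * K by positivity)
  calc H * K * shortSum χ b₀ v₀ A B L
      ≤ shiftedSum χ b₀ v₀ A B L H K + 4 * A * L * H ^ 2 * K ^ 2 :=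
        mul_shortSum_le χ b₀ v₀ hA hH hAp hHp B L K
    _ = shiftedSum χ b₀ v₀ A B L H K + 4 * A * L * (H * K) * (H * K) := by ring
    _ ≤ C * (A * B * L * H) * K * t + 4 * A * L * (H * K) * (B * t) := by gcongr
    _ = H * K * ((C + 4) * A * B * L * t) := by ring

theorem shortSum_le (hχ : χ ≠ 1) (b₀ v₀ : ZMod p) (hA : 0 < A) (hL : L ≤ A * B)
    (hp : 24 * (A * B) ^ 2 < p) (hr : r ≠ 0) (hC : 1 ≤ C) (hy : 1 ≤ y) (hyB : y ^ 5 ≤ B)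
    (hdiv : ∀ n ≤ p, #n.divisors ≤ C * y) (hyr : √p ≤ y ^ r)
    (hAB : √p * y ^ 10 ≤ (A * B : ℝ) ^ 2) (hBL : √p * y ^ 10 ≤ (B * L : ℝ) ^ 2)
    (hyt : (y ^ 5)⁻¹ ≤ t ^ (2 * r)) (ht : y⁻¹ ≤ t) :
    shortSum χ b₀ v₀ A B L ≤ (burgessConst C r + 4) * A * B * L * t := by
  have hy0 : 0 < y := one_pos.trans_le hy
  have hyB2 : y ^ 2 ≤ B := (pow_le_pow_right₀ hy (by norm_num)).trans hyB
  have hB : 0 < B := by exact_mod_cast (pow_pos hy0 2).trans_le hyB2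
  have hBp : 24 * (A * B) < p :=
    (Nat.mul_le_mul_left 24 (Nat.le_self_pow two_ne_zero _)).trans_lt hp
  have hAAB : A ≤ A * B := Nat.le_mul_of_pos_right A hB
  have hBAB : B ≤ A * B := Nat.le_mul_of_pos_left B hA
  have hBy : 1 ≤ B / y ^ 2 := (one_le_div (by positivity)).2 hyB2
  let K := ⌊y⌋₊
  let H := ⌊B / y ^ 2⌋₊
  have hK : 0 < K := Nat.floor_pos.2 hy
  have hH : 0 < H := Nat.floor_pos.2 hBy
  have hKy : (K : ℝ) ≤ y := Nat.floor_le hy0.le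
  have hHy : (H : ℝ) ≤ B / y ^ 2 := Nat.floor_le (by positivity)
  have hyK : y ≤ 2 * K := by linarith [Nat.div_two_lt_floor hy]
  have hByH : B ≤ 2 * H * y ^ 2 := by
    rw [← div_le_iff₀ (by positivity)]
    linarith [Nat.div_two_lt_floor hBy]
  have hHB : H ≤ B := by
    exact_mod_cast hHy.trans (div_le_self B.cast_nonneg (one_le_pow₀ hy))
  have hKB : K ≤ B := by
    exact_mod_cast hKy.trans ((le_self_pow₀ hy (by norm_num)).trans hyB)
  have hHK : H * K ≤ B * t :=
    calc (H * K : ℝ) ≤ B / y ^ 2 * y := by gcongr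
      _ = B * y⁻¹ := by field_simp
      _ ≤ B * t := by gcongr
  have hAH : A * H ≤ A * B := Nat.mul_le_mul_left A hHB
  refine shortSum_le_of_shiftedSum_le b₀ v₀ hA hH hK (by lia) (by lia) hHK ?_
  refine shiftedSum_le (T := ⌊C * y⌋₊) hχ b₀ v₀ hA hH hHB hL hp (fun s hs ↦ ?_) hK (by lia) hr hC
    hy0 ((inv_pos.2 hy0).le.trans ht) (Nat.floor_le (by positivity)) hByH ?_ hAB hBL hyt
  · exact Nat.le_floor (hdiv s (by linarith [(mem_Icc.1 hs).2]))
  · exact hyr.trans (by gcongr)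

/-- The Burgess bound for `χ`: as soon as `A * B` and `B * L` are both at least `p ^ (1 / 4 + δ)`
(and `B` and `L` are in a suitable range), the short sums of `χ` are smaller than the trivial bound
`A * B * L` by a factor `C * p ^ (-κ)`. -/
def HasShortSumBound (χ : MulChar (ZMod p) ℂ) (δ κ C : ℝ) : Prop :=
  ∀ (A B L : ℕ) (b₀ v₀ : ZMod p), L ≤ A * B → 24 * (A * B) ^ 2 < p → (p : ℝ) ^ δ ≤ B →
    (p : ℝ) ^ (1 / 4 + δ) ≤ A * B → (p : ℝ) ^ (1 / 4 + δ) ≤ B * L →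
    shortSum χ b₀ v₀ A B L ≤ C * A * B * L * (p : ℝ) ^ (-κ)

theorem exists_hasShortSumBound {δ : ℝ} (hδ : 0 < δ) :
    ∃ κ : ℝ, 0 < κ ∧ κ ≤ δ ∧ ∃ C : ℝ, 1 ≤ C ∧ ∀ (p : ℕ) [Fact p.Prime]
      (χ : MulChar (ZMod p) ℂ), χ ≠ 1 → HasShortSumBound χ δ κ C := by
  obtain ⟨D, hD, hdiv⟩ := exists_card_divisors_le_mul_rpow (ε := δ / 5) (by positivity)
  obtain ⟨r, hr⟩ := exists_nat_ge (5 / (2 * δ) + 3)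
  have hδ2 : 0 < 5 / (2 * δ) := by positivity
  have hr3 : (3 : ℝ) ≤ r := by linarith
  have hr0 : r ≠ 0 := by rintro rfl; norm_num at hr3
  refine ⟨δ / (2 * r), by positivity, div_le_self hδ.le (by linarith), burgessConst D r + 4,
    by linarith [one_le_burgessConst hD hr0], ?_⟩
  intro p _ χ hχ A B L b₀ v₀ hL hp hB hAB hBL
  have hp0 : (0 : ℝ) < p := by exact_mod_cast (Fact.out : p.Prime).pos
  have hp1 : (1 : ℝ) ≤ p := by exact_mod_cast (Fact.out : p.Prime).one_le
  have hA : 0 < A := Nat.cast_pos.1 <|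
    pos_of_mul_pos_left ((Real.rpow_pos_of_pos hp0 _).trans_le hAB) B.cast_nonneg
  have hypow (n : ℕ) : ((p : ℝ) ^ (δ / 5)) ^ n = (p : ℝ) ^ (δ / 5 * n) :=
    (Real.rpow_mul_natCast hp0.le _ _).symm
  have hy5 : ((p : ℝ) ^ (δ / 5)) ^ 5 = (p : ℝ) ^ δ := by
    rw [hypow]
    congr 1
    push_cast
    ring
  have hsq : √p * ((p : ℝ) ^ (δ / 5)) ^ 10 = ((p : ℝ) ^ (1 / 4 + δ)) ^ 2 := by
    rw [Real.sqrt_eq_rpow, hypow, ← Real.rpow_add hp0, ← Real.rpow_mul_natCast hp0.le]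
    congr 1
    push_cast
    ring
  refine shortSum_le hχ b₀ v₀ hA hL hp hr0 hD (Real.one_le_rpow hp1 (by positivity))
    (hy5.trans_le hB) (fun n hn ↦ (hdiv n).trans ?_) ?_ (hsq.trans_le (by gcongr))
    (hsq.trans_le (by gcongr)) ?_ ?_
  · gcongr
  · rw [Real.sqrt_eq_rpow, hypow]
    refine Real.rpow_le_rpow_of_exponent_le hp1 ?_
    have hδr : 5 ≤ r * (2 * δ) := (div_le_iff₀ (by positivity)).1 (by linarith)
    linarith
  · rw [hy5, ← Real.rpow_mul_natCast hp0.le, ← Real.rpow_neg hp0.le]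
    refine le_of_eq (congrArg _ ?_)
    push_cast
    field_simp
  · rw [← Real.rpow_neg hp0.le]
    refine Real.rpow_le_rpow_of_exponent_le hp1 (neg_le_neg ?_)
    exact div_le_div_of_nonneg_left hδ.le (by norm_num) (by linarith)

end BurgessBound

section Decompositions

theorem sum_range_mul_eq_sum_blocks {M : Type*} [AddCommMonoid M] (f : ℕ → M) (q B : ℕ) :
    ∑ b ∈ range (q * B), f b = ∑ j ∈ range q, ∑ β ∈ range B, f (j * B + β) := by
  induction q with
  | zero => rw [zero_mul, range_zero, sum_empty, sum_empty]
  | succ q ih => rw [Nat.succ_mul, sum_range_add, ih, sum_range_succ]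

theorem norm_sum_range_sub_sum_blocks_le {E : Type*} [SeminormedAddCommGroup E] {f : ℕ → E}
    (hf : ∀ n, ‖f n‖ ≤ 1) {B : ℕ} (hB : 0 < B) (n : ℕ) :
    ‖∑ b ∈ range n, f b - ∑ j ∈ range (n / B), ∑ β ∈ range B, f (j * B + β)‖ ≤ B := by
  have hsplit : ∑ b ∈ range n, f b = ∑ j ∈ range (n / B), ∑ β ∈ range B, f (j * B + β) +
      ∑ b ∈ range (n % B), f (n / B * B + b) := by
    rw [← sum_range_mul_eq_sum_blocks, ← sum_range_add, Nat.div_add_mod']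
  rw [hsplit, add_sub_cancel_left]
  refine (norm_sum_le_of_le _ fun b _ ↦ hf _).trans ?_
  rw [sum_const, card_range, nsmul_one]
  exact_mod_cast (Nat.mod_lt n hB).le

theorem norm_sum_Ioc_le_sum_norm_blocks {E : Type*} [SeminormedAddCommGroup E] {f : ℕ → E}
    (hf : ∀ n, ‖f n‖ ≤ 1) {B J y : ℕ} (hB : 0 < B) (hJ : (y + 1) / B ≤ J) (x : ℕ) :
    ‖∑ b ∈ Ioc x y, f b‖ ≤ ∑ j ∈ range J, ‖∑ β ∈ range B, f (j * B + β)‖ + 2 * B := by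
  obtain hyx | hxy := lt_or_ge y x
  · rw [Ioc_eq_empty_of_le hyx.le, sum_empty, norm_zero]
    positivity
  let S (n : ℕ) : E := ∑ b ∈ range n, f b
  let T (n : ℕ) : E := ∑ j ∈ range (n / B), ∑ β ∈ range B, f (j * B + β)
  have hS : ∑ b ∈ Ioc x y, f b = S (y + 1) - S (x + 1) := by
    rw [← sum_Ico_eq_sub _ (by lia), ← Ico_add_one_add_one_eq_Ioc]
  have hT : ‖T (y + 1) - T (x + 1)‖ ≤ ∑ j ∈ range J, ‖∑ β ∈ range B, f (j * B + β)‖ := by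
    rw [← sum_Ico_eq_sub _ (Nat.div_le_div_right (by lia))]
    refine (norm_sum_le _ _).trans
      (sum_le_sum_of_subset_of_nonneg (fun j hj ↦ ?_) fun _ _ _ ↦ norm_nonneg _)
    exact mem_range.2 ((mem_Ico.1 hj).2.trans_le hJ)
  have hdecomp : ∑ b ∈ Ioc x y, f b =
      (T (y + 1) - T (x + 1)) + ((S (y + 1) - T (y + 1)) - (S (x + 1) - T (x + 1))) := by
    rw [hS]
    abel
  have hrem (n : ℕ) : ‖S n - T n‖ ≤ B := norm_sum_range_sub_sum_blocks_le hf hB n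
  rw [hdecomp, two_mul]
  exact (norm_add_le _ _).trans
    (add_le_add hT ((norm_sub_le _ _).trans (add_le_add (hrem _) (hrem _))))

theorem sum_Icc_le_sum_blocks {g : ℕ → ℝ} (hg : ∀ n, 0 ≤ g n) (M : ℕ) {L : ℕ} (hL : 0 < L) :
    ∑ v ∈ Icc 1 M, g v ≤ ∑ i ∈ range (M / L + 1), ∑ ν ∈ range L, g (i * L + ν) := by
  rw [← sum_range_mul_eq_sum_blocks]
  refine sum_le_sum_of_subset_of_nonneg (fun v hv ↦ mem_range.2 ?_) fun _ _ _ ↦ hg _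
  rw [mul_comm]
  exact (mem_Icc.1 hv).2.trans_lt (Nat.lt_mul_div_succ M hL)

theorem sum_Ico_one_two_pow {M : Type*} [AddCommMonoid M] (g : ℕ → M) (q : ℕ) :
    ∑ a ∈ Ico 1 (2 ^ q), g a = ∑ j ∈ range q, ∑ a ∈ Ico (2 ^ j) (2 * 2 ^ j), g a := by
  induction q with
  | zero => rw [pow_zero, Ico_self, sum_empty, range_zero, sum_empty]
  | succ q ih =>
    rw [sum_range_succ, ← ih, pow_succ']
    exact (sum_Ico_consecutive _ Nat.one_le_two_pow (by lia)).symm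

theorem sum_Icc_le_log_mul {g : ℕ → ℝ} (hg : ∀ n, 0 ≤ g n) {s : ℕ} {R : ℝ}
    (hR : ∀ A, 0 < A → A ≤ s → ∑ a ∈ Ico A (2 * A), g a ≤ R) (hs : s ≠ 0) :
    ∑ a ∈ Icc 1 s, g a ≤ (Nat.log 2 s + 1) * R := by
  calc ∑ a ∈ Icc 1 s, g a ≤ ∑ a ∈ Ico 1 (2 ^ (Nat.log 2 s + 1)), g a := by
        refine sum_le_sum_of_subset_of_nonneg (fun a ha ↦ ?_) fun _ _ _ ↦ hg _
        rw [mem_Icc] at ha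
        exact mem_Ico.2 ⟨ha.1, ha.2.trans_lt (Nat.lt_pow_succ_log_self one_lt_two s)⟩
    _ ≤ ∑ _j ∈ range (Nat.log 2 s + 1), R := by
        rw [sum_Ico_one_two_pow]
        refine sum_le_sum fun _ hj ↦ hR _ (pow_pos two_pos _) ?_
        exact Nat.pow_le_of_le_log hs (Nat.lt_succ_iff.1 (mem_range.1 hj))
    _ = (Nat.log 2 s + 1) * R := by rw [sum_const, card_range, nsmul_eq_mul, Nat.cast_add_one]

end Decompositions

section Hyperbola

variable {M : Type*} [AddCommMonoid M]

/-- The pairs of positive integers with product at most `N`. -/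
def hyperbolaRegion (N : ℕ) : Finset (ℕ × ℕ) := {x ∈ Ioc 0 N ×ˢ Ioc 0 N | x.1 * x.2 ≤ N}

theorem mem_hyperbolaRegion {N : ℕ} {x : ℕ × ℕ} :
    x ∈ hyperbolaRegion N ↔ 0 < x.1 ∧ 0 < x.2 ∧ x.1 * x.2 ≤ N := by
  simp only [hyperbolaRegion, mem_filter, mem_product, mem_Ioc]
  refine ⟨fun h ↦ ⟨h.1.1.1, h.1.2.1, h.2⟩, fun ⟨h₁, h₂, h⟩ ↦ ⟨⟨⟨h₁, ?_⟩, h₂, ?_⟩, h⟩⟩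
  · exact (Nat.le_mul_of_pos_right _ h₂).trans h
  · exact (Nat.le_mul_of_pos_left _ h₁).trans h

theorem sum_card_divisors_nsmul (f : ℕ → M) (N : ℕ) :
    ∑ u ∈ Icc 1 N, #u.divisors • f u = ∑ x ∈ hyperbolaRegion N, f (x.1 * x.2) := by
  have hmaps : ∀ x ∈ hyperbolaRegion N, x.1 * x.2 ∈ Icc 1 N := fun x hx ↦ by
    obtain ⟨h₁, h₂, h⟩ := mem_hyperbolaRegion.1 hx
    exact mem_Icc.2 ⟨Nat.mul_pos h₁ h₂, h⟩
  rw [← sum_fiberwise_of_maps_to hmaps]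
  refine sum_congr rfl fun u hu ↦ ?_
  have hfiber : {x ∈ hyperbolaRegion N | x.1 * x.2 = u} = u.divisorsAntidiagonal := by
    rw [mem_Icc] at hu
    ext x
    rw [mem_filter, mem_hyperbolaRegion, Nat.mem_divisorsAntidiagonal]
    refine ⟨fun h ↦ ⟨h.2, by lia⟩, fun h ↦ ⟨?_, h.1⟩⟩
    have hx : 0 < x.1 * x.2 := by lia
    exact ⟨Nat.pos_of_mul_pos_right hx, Nat.pos_of_mul_pos_left hx, by lia⟩
  rw [sum_congr rfl fun x hx ↦ by rw [(mem_filter.1 hx).2], sum_const, hfiber,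
    ← Nat.map_div_right_divisors, card_map]

theorem sum_hyperbolaRegion_filter_lt (g : ℕ → ℕ → M) (N : ℕ) :
    ∑ x ∈ hyperbolaRegion N with x.1 < x.2, g x.1 x.2 =
      ∑ a ∈ Icc 1 N.sqrt, ∑ b ∈ Ioc a (N / a), g a b := by
  rw [sum_sigma']
  refine sum_nbij' (fun x ↦ ⟨x.1, x.2⟩) (fun x ↦ (x.1, x.2)) ?_ ?_
    (fun _ _ ↦ rfl) (fun _ _ ↦ rfl) (fun _ _ ↦ rfl)
  · rintro ⟨a, b⟩ hx
    simp only [mem_filter, mem_hyperbolaRegion, mem_sigma, mem_Icc, mem_Ioc] at hx ⊢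
    obtain ⟨⟨ha, -, hN⟩, hab⟩ := hx
    exact ⟨⟨ha, Nat.le_sqrt.2 ((Nat.mul_le_mul_left a hab.le).trans hN)⟩, hab,
      (Nat.le_div_iff_mul_le ha).2 (by rwa [mul_comm])⟩
  · rintro ⟨a, b⟩ hx
    simp only [mem_filter, mem_hyperbolaRegion, mem_sigma, mem_Icc, mem_Ioc] at hx ⊢
    obtain ⟨⟨ha, -⟩, hab, hN⟩ := hx
    rw [Nat.le_div_iff_mul_le ha, mul_comm] at hN
    exact ⟨⟨ha, by lia, hN⟩, hab⟩

theorem sum_hyperbolaRegion_filter_eq (g : ℕ → ℕ → M) (N : ℕ) :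
    ∑ x ∈ hyperbolaRegion N with x.1 = x.2, g x.1 x.2 = ∑ a ∈ Icc 1 N.sqrt, g a a := by
  refine sum_nbij' (fun x ↦ x.1) (fun a ↦ (a, a)) ?_ ?_ ?_ (fun _ _ ↦ rfl) ?_
  · rintro ⟨a, b⟩ hx
    simp only [mem_filter, mem_hyperbolaRegion, mem_Icc] at hx ⊢
    obtain ⟨⟨ha, -, hN⟩, rfl⟩ := hx
    exact ⟨ha, Nat.le_sqrt.2 hN⟩
  · intro a ha
    simp only [mem_filter, mem_hyperbolaRegion, mem_Icc] at ha ⊢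
    exact ⟨⟨ha.1, ha.1, Nat.le_sqrt.1 ha.2⟩, trivial⟩
  all_goals
    rintro ⟨a, b⟩ hx
    obtain rfl : a = b := (mem_filter.1 hx).2
    rfl

theorem sum_hyperbolaRegion_eq (f : ℕ → M) (N : ℕ) :
    ∑ x ∈ hyperbolaRegion N, f (x.1 * x.2) =
      2 • ∑ x ∈ hyperbolaRegion N with x.1 < x.2, f (x.1 * x.2) +
        ∑ x ∈ hyperbolaRegion N with x.1 = x.2, f (x.1 * x.2) := by
  have hswap : ∑ x ∈ hyperbolaRegion N with x.2 < x.1, f (x.1 * x.2) =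
      ∑ x ∈ hyperbolaRegion N with x.1 < x.2, f (x.1 * x.2) := by
    refine sum_equiv (Equiv.prodComm ℕ ℕ) (fun x ↦ ?_) fun x _ ↦ ?_
    · simp only [mem_filter, mem_hyperbolaRegion, Equiv.prodComm_apply, Prod.fst_swap,
        Prod.snd_swap, mul_comm x.2]
      tauto
    · rw [Equiv.prodComm_apply, Prod.fst_swap, Prod.snd_swap, mul_comm]
  rw [← sum_filter_add_sum_filter_not (hyperbolaRegion N) (fun x ↦ x.1 < x.2),
    ← sum_filter_add_sum_filter_not {x ∈ hyperbolaRegion N | ¬x.1 < x.2} (fun x ↦ x.2 < x.1),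
    filter_filter, filter_filter, two_nsmul, add_assoc]
  congr 2
  · rw [← hswap]
    exact sum_congr (filter_congr fun x _ ↦ by lia) fun _ _ ↦ rfl
  · exact sum_congr (filter_congr fun x _ ↦ by lia) fun _ _ ↦ rfl

theorem norm_sum_card_divisors_nsmul_le {E : Type*} [SeminormedAddCommGroup E] {f : ℕ → E}
    (hf : ∀ n, ‖f n‖ ≤ 1) (N : ℕ) :
    ‖∑ u ∈ Icc 1 N, #u.divisors • f u‖ ≤
      2 * ∑ a ∈ Icc 1 N.sqrt, ‖∑ b ∈ Ioc a (N / a), f (a * b)‖ + N.sqrt := by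
  rw [sum_card_divisors_nsmul, sum_hyperbolaRegion_eq,
    sum_hyperbolaRegion_filter_lt (fun a b ↦ f (a * b)),
    sum_hyperbolaRegion_filter_eq (fun a b ↦ f (a * b))]
  refine (norm_add_le _ _).trans (add_le_add ?_ ?_)
  · rw [two_nsmul, two_mul]
    exact (norm_add_le _ _).trans (add_le_add (norm_sum_le _ _) (norm_sum_le _ _))
  · refine (norm_sum_le_of_le _ fun a _ ↦ hf (a * a)).trans_eq ?_
    rw [sum_const, Nat.card_Icc, Nat.add_sub_cancel, nsmul_one]

end Hyperbola

section HyperbolaSum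

variable {p : ℕ} [Fact p.Prime] (χ : MulChar (ZMod p) ℂ)

/-- The contribution to the bilinear character sum of a dyadic range `A ≤ a < 2 * A` of the smaller
divisor `a` of `u = a * b ≤ N`, with the sum over the larger divisor `b` innermost. -/
noncomputable def hyperbolaSum (N M A : ℕ) : ℝ :=
  ∑ a ∈ Ico A (2 * A), ∑ v ∈ Icc 1 M, ‖∑ b ∈ Ioc a (N / a), χ (a * b - v)‖

theorem div_add_one_div_le {N A B a : ℕ} (hA : 0 < A) (hB : 0 < B) (ha : A ≤ a) :
    (N / a + 1) / B ≤ N / (A * B) + 1 := by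
  calc (N / a + 1) / B ≤ (N / A + B) / B :=
        Nat.div_le_div_right (Nat.add_le_add (Nat.div_le_div_left ha hA) hB)
    _ = N / A / B + 1 := Nat.add_div_right _ hB
    _ = N / (A * B) + 1 := by rw [Nat.div_div_eq_div_mul]

theorem hyperbolaSum_le_sum_blocks (N M : ℕ) {A B : ℕ} (hA : 0 < A) (hB : 0 < B) :
    hyperbolaSum χ N M A ≤ ∑ j ∈ range (N / (A * B) + 1), ∑ a ∈ Ico A (2 * A), ∑ v ∈ Icc 1 M,
      ‖∑ β ∈ range B, χ (a * (((j * B : ℕ) : ZMod p) + β) - v)‖ + 2 * (A * B) * M := by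
  calc hyperbolaSum χ N M A
      ≤ ∑ a ∈ Ico A (2 * A), ∑ v ∈ Icc 1 M, (∑ j ∈ range (N / (A * B) + 1),
          ‖∑ β ∈ range B, χ (a * ((j * B + β : ℕ) : ZMod p) - v)‖ + 2 * B) := by
        refine sum_le_sum fun a ha ↦ sum_le_sum fun v _ ↦ ?_
        exact norm_sum_Ioc_le_sum_norm_blocks (f := fun b : ℕ ↦ χ (a * b - v))
          (fun _ ↦ norm_mulChar_le_one χ _) hB
          (div_add_one_div_le hA hB (mem_Ico.1 ha).1) a
    _ = ∑ j ∈ range (N / (A * B) + 1), ∑ a ∈ Ico A (2 * A), ∑ v ∈ Icc 1 M,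
          ‖∑ β ∈ range B, χ (a * (((j * B : ℕ) : ZMod p) + β) - v)‖ + 2 * (A * B) * M := by
        rw [sum_comm (s := range _)]
        simp only [sum_add_distrib, sum_comm (s := range (N / (A * B) + 1)), sum_const,
          Nat.card_Icc, Nat.card_Ico, nsmul_eq_mul, Nat.add_sub_cancel, two_mul A, Nat.cast_add]
        ring

theorem hyperbolaSum_le_of_shortSum_le (N M : ℕ) {A B L : ℕ} (hA : 0 < A) (hB : 0 < B)
    (hL : 0 < L) {K : ℝ} (hK : ∀ b₀ v₀, shortSum χ b₀ v₀ A B L ≤ K) :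
    hyperbolaSum χ N M A ≤
      (N / (A * B) + 1 : ℕ) * ((M / L + 1 : ℕ) * K) + 2 * (A * B) * M := by
  refine (hyperbolaSum_le_sum_blocks χ N M hA hB).trans ?_
  gcongr
  refine (sum_le_card_nsmul (range _) _ ((M / L + 1 : ℕ) * K) fun j _ ↦ ?_).trans_eq
    (by rw [card_range, nsmul_eq_mul])
  calc ∑ a ∈ Ico A (2 * A), ∑ v ∈ Icc 1 M,
        ‖∑ β ∈ range B, χ (a * (((j * B : ℕ) : ZMod p) + β) - v)‖
      ≤ ∑ a ∈ Ico A (2 * A), ∑ i ∈ range (M / L + 1), ∑ ν ∈ range L,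
          ‖∑ β ∈ range B, χ (a * (((j * B : ℕ) : ZMod p) + β) - (i * L + ν : ℕ))‖ :=
        sum_le_sum fun a _ ↦ sum_Icc_le_sum_blocks (fun _ ↦ norm_nonneg _) M hL
    _ = ∑ i ∈ range (M / L + 1), shortSum χ (j * B : ℕ) (i * L : ℕ) A B L := by
        rw [sum_comm]
        simp only [shortSum, Nat.cast_add]
    _ ≤ (M / L + 1 : ℕ) * K := by
        refine (sum_le_card_nsmul _ _ _ fun i _ ↦ hK _ _).trans_eq ?_
        rw [card_range, nsmul_eq_mul]

theorem hyperbolaSum_le_of_norm_sum_range_le (N M : ℕ) {A B : ℕ} (hA : 0 < A) (hB : 0 < B)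
    (hAp : 2 * A ≤ p) {K : ℝ} (hK : ∀ c, ‖∑ β ∈ range B, χ (c + β)‖ ≤ K) :
    hyperbolaSum χ N M A ≤ (N / (A * B) + 1 : ℕ) * (A * M * K) + 2 * (A * B) * M := by
  have hterm {j a : ℕ} (v : ℕ) (ha : a ∈ Ico A (2 * A)) :
      ‖∑ β ∈ range B, χ (a * (((j * B : ℕ) : ZMod p) + β) - v)‖ ≤ K := by
    rw [mem_Ico] at ha
    have ha₀ : (a : ZMod p) ≠ 0 := natCast_ne_zero_of_lt (by lia) (by lia)
    have hfactor : ∑ β ∈ range B, χ (a * (((j * B : ℕ) : ZMod p) + β) - v) =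
        χ a * ∑ β ∈ range B, χ ((((j * B : ℕ) : ZMod p) - v / a) + β) := by
      rw [mul_sum]
      refine sum_congr rfl fun β _ ↦ ?_
      rw [← map_mul]
      congr 1
      field_simp
      ring
    rw [hfactor, norm_mul]
    exact (mul_le_of_le_one_left (norm_nonneg _) (norm_mulChar_le_one χ _)).trans (hK _)
  refine (hyperbolaSum_le_sum_blocks χ N M hA hB).trans ?_
  gcongr
  calc ∑ j ∈ range (N / (A * B) + 1), ∑ a ∈ Ico A (2 * A), ∑ v ∈ Icc 1 M,
        ‖∑ β ∈ range B, χ (a * (((j * B : ℕ) : ZMod p) + β) - v)‖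
      ≤ ∑ _j ∈ range (N / (A * B) + 1), ∑ _a ∈ Ico A (2 * A), ∑ _v ∈ Icc 1 M, K :=
        sum_le_sum fun _ _ ↦ sum_le_sum fun _ ha ↦ sum_le_sum fun v _ ↦ hterm v ha
    _ = (N / (A * B) + 1 : ℕ) * (A * M * K) := by
        simp only [sum_const, card_range, Nat.card_Ico, Nat.card_Icc, nsmul_eq_mul,
          Nat.add_sub_cancel, two_mul A]
        ring

theorem natCast_div_add_one_mul_le {N D : ℕ} (h : D ≤ N) :
    ((N / D + 1 : ℕ) : ℝ) * D ≤ 2 * N := by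
  have hdiv := Nat.div_mul_le_self N D
  have hmul : (N / D + 1) * D ≤ 2 * N := by lia
  exact_mod_cast hmul

theorem hyperbolaSum_le_of_shortSum_le_mul {N M A B L : ℕ} (hA : 0 < A) (hB : 0 < B) (hL : 0 < L)
    (hLM : L ≤ M) {C e : ℝ} (hC : 1 ≤ C) (he : 0 ≤ e) (he₁ : e ≤ 1) (hABN : (A : ℝ) * B ≤ N * e)
    (hK : ∀ b₀ v₀, shortSum χ b₀ v₀ A B L ≤ C * A * B * L * e) :
    hyperbolaSum χ N M A ≤ 6 * C * N * M * e := by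
  have hABN' : A * B ≤ N := by
    exact_mod_cast hABN.trans (mul_le_of_le_one_right N.cast_nonneg he₁)
  calc hyperbolaSum χ N M A
      ≤ C * e * (((N / (A * B) + 1 : ℕ) * (A * B : ℕ)) * ((M / L + 1 : ℕ) * L)) +
          2 * (A * B) * M := by
        refine (hyperbolaSum_le_of_shortSum_le χ N M hA hB hL hK).trans_eq ?_
        rw [Nat.cast_mul A B]
        ring
    _ ≤ C * e * ((2 * N) * (2 * M)) + 2 * (C * (N * e)) * M := by
        gcongr C * e * (?_ * ?_) + 2 * ?_ * M
        · exact natCast_div_add_one_mul_le hABN'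
        · exact natCast_div_add_one_mul_le hLM
        · exact hABN.trans (le_mul_of_one_le_left (by positivity) hC)
    _ = 6 * C * N * M * e := by ring

theorem hyperbolaSum_le_of_norm_sum_range_le_mul {N A B : ℕ} (M : ℕ) (hA : 0 < A) (hB : 0 < B)
    (hAp : 2 * A ≤ p) {C e : ℝ} (hC : 1 ≤ C) (he : 0 ≤ e) (he₁ : e ≤ 1)
    (hABN : (A : ℝ) * B ≤ N * e) (hK : ∀ c, ‖∑ β ∈ range B, χ (c + β)‖ ≤ C * B * e) :
    hyperbolaSum χ N M A ≤ 4 * C * N * M * e := by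
  have hABN' : A * B ≤ N := by
    exact_mod_cast hABN.trans (mul_le_of_le_one_right N.cast_nonneg he₁)
  calc hyperbolaSum χ N M A
      ≤ C * e * M * ((N / (A * B) + 1 : ℕ) * (A * B : ℕ)) + 2 * (A * B) * M := by
        refine (hyperbolaSum_le_of_norm_sum_range_le χ N M hA hB hAp hK).trans_eq ?_
        rw [Nat.cast_mul A B]
        ring
    _ ≤ C * e * M * (2 * N) + 2 * (C * (N * e)) * M := by
        gcongr C * e * M * ?_ + 2 * ?_ * M
        · exact natCast_div_add_one_mul_le hABN'
        · exact hABN.trans (le_mul_of_one_le_left (by positivity) hC)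
    _ = 4 * C * N * M * e := by ring

end HyperbolaSum

section BlockLengths

variable {x δ : ℝ}

theorem mul_rpow_le_rpow {c s t : ℝ} (hx : 1 ≤ x) (hc : c ≤ x ^ δ) (h : s + δ ≤ t) :
    c * x ^ s ≤ x ^ t := by
  calc c * x ^ s ≤ x ^ δ * x ^ s := by gcongr
    _ = x ^ (s + δ) := by rw [← Real.rpow_add (by linarith), add_comm]
    _ ≤ x ^ t := Real.rpow_le_rpow_of_exponent_le hx h

theorem rpow_sq (hx : 0 ≤ x) (s : ℝ) : (x ^ s) ^ 2 = x ^ (2 * s) := by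
  rw [← Real.rpow_mul_natCast hx, Nat.cast_ofNat, mul_comm]

theorem mul_le_of_sq_le {a b n : ℝ} (ha : a ^ 2 ≤ n) (hb : b ^ 2 ≤ n) : a * b ≤ n := by
  linarith [two_mul_le_add_sq a b]

theorem const_mul_sq_lt_of_le_rpow {s z : ℝ} (hx : 1 ≤ x) (hxδ : 100 ≤ x ^ δ) (hz : 0 ≤ z)
    (hzs : z ≤ x ^ s) (h : 2 * s + δ ≤ 1) : 24 * z ^ 2 < x := by
  have hx₀ : 0 < x := by linarith
  have hzs' : z ^ 2 ≤ x ^ (2 * s) := by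
    rw [← rpow_sq hx₀.le]
    gcongr
  have hxs := mul_rpow_le_rpow hx hxδ h
  rw [Real.rpow_one] at hxs
  linarith [Real.rpow_pos_of_pos hx₀ (2 * s)]

theorem rpow_le_mul_rpow_neg_div {a n : ℝ} (hx : 1 ≤ x) (ha : 0 < a) (han : a ^ 2 ≤ n) {s t : ℝ}
    (hn : x ^ (2 * (s + t)) ≤ n) : x ^ s ≤ n * x ^ (-t) / a := by
  have hx₀ : 0 < x := by linarith
  rw [le_div_iff₀ ha, Real.rpow_neg hx₀.le, ← div_eq_mul_inv,
    le_div_iff₀ (Real.rpow_pos_of_pos hx₀ _), mul_right_comm, ← Real.rpow_add hx₀]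
  exact mul_le_of_sq_le ((rpow_sq hx₀.le _).trans_le hn) han

theorem exists_block_length_of_le {a n : ℝ} (hx : 1 ≤ x) (hδ : 0 < δ) (hxδ : 100 ≤ x ^ δ)
    (ha : 0 < a) (han : a ^ 2 ≤ n) (hn : x ^ (1 / 4 + 64 * δ) ≤ n)
    (hn' : n ≤ x ^ (1 / 2 + 8 * δ)) :
    ∃ B : ℕ, x ^ (1 / 8 + 2 * δ) ≤ B ∧ x ^ (1 / 4 + δ) ≤ a * B ∧ 24 * (a * B) ^ 2 < x ∧
      a * B ≤ n * x ^ (-(2 * δ)) := by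
  have hx₀ : 0 < x := by linarith
  have hn₀ : 0 < n := (Real.rpow_pos_of_pos hx₀ _).trans_le hn
  let y := n * x ^ (-(16 * δ)) / a
  have hay : a * y = n * x ^ (-(16 * δ)) := mul_div_cancel₀ _ ha.ne'
  have hay_ge : x ^ (1 / 4 + 48 * δ) ≤ a * y := by
    calc x ^ (1 / 4 + 48 * δ) = x ^ (1 / 4 + 64 * δ) * x ^ (-(16 * δ)) := by
          rw [← Real.rpow_add hx₀]
          ring_nf
      _ ≤ a * y := by
          rw [hay]
          gcongr
  have hy_ge : x ^ (1 / 8 + 3 * δ) ≤ y := rpow_le_mul_rpow_neg_div hx ha han <|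
    (Real.rpow_le_rpow_of_exponent_le hx (by linarith)).trans hn
  have hy₁ : 1 ≤ y := (Real.one_le_rpow hx (by positivity)).trans hy_ge
  have hfloor : y / 2 < ⌊y⌋₊ := Nat.div_two_lt_floor hy₁
  have hB_le : a * ⌊y⌋₊ ≤ n * x ^ (-(16 * δ)) := by
    rw [← hay]
    exact mul_le_mul_of_nonneg_left (Nat.floor_le (by linarith)) ha.le
  have hB_le' : a * ⌊y⌋₊ ≤ x ^ (1 / 2 - 8 * δ) := by
    calc a * ⌊y⌋₊ ≤ x ^ (1 / 2 + 8 * δ) * x ^ (-(16 * δ)) := hB_le.trans (by gcongr)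
      _ = x ^ (1 / 2 - 8 * δ) := by
          rw [← Real.rpow_add hx₀]
          ring_nf
  refine ⟨⌊y⌋₊, ?_, ?_, ?_, ?_⟩
  · have h := mul_rpow_le_rpow (s := 1 / 8 + 2 * δ) (t := 1 / 8 + 3 * δ) hx hxδ (by linarith)
    linarith [Real.rpow_pos_of_pos hx₀ (1 / 8 + 2 * δ)]
  · have h := mul_rpow_le_rpow (s := 1 / 4 + δ) (t := 1 / 4 + 48 * δ) hx hxδ (by linarith)
    have h' : a * (y / 2) ≤ a * ⌊y⌋₊ := by gcongr
    linarith [Real.rpow_pos_of_pos hx₀ (1 / 4 + δ)]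
  · exact const_mul_sq_lt_of_le_rpow hx hxδ (by positivity) hB_le' (by linarith)
  · refine hB_le.trans ?_
    gcongr 1
    exact Real.rpow_le_rpow_of_exponent_le hx (by linarith)

theorem exists_block_length_of_gt {a n : ℝ} (hx : 1 ≤ x) (hδ : 0 < δ) (hδ' : δ ≤ 1 / 10)
    (hxδ : 100 ≤ x ^ δ) (han : a ^ 2 ≤ n) (hn : x ^ (1 / 2 + 8 * δ) < n) :
    ∃ B : ℕ, x ^ (1 / 4 + δ) ≤ B ∧ 24 * (B : ℝ) ^ 2 < x ∧ a * B ≤ n * x ^ (-(2 * δ)) := by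
  have hx₀ : 0 < x := by linarith
  set y := x ^ (1 / 4 + 2 * δ) with hy
  have hy₁ : 1 ≤ y := Real.one_le_rpow hx (by positivity)
  have hfloor : y / 2 < ⌊y⌋₊ := Nat.div_two_lt_floor hy₁
  have hB_le : (⌊y⌋₊ : ℝ) ≤ y := Nat.floor_le (by linarith)
  refine ⟨⌊y⌋₊, ?_, ?_, ?_⟩
  · have h := mul_rpow_le_rpow (s := 1 / 4 + δ) (t := 1 / 4 + 2 * δ) hx hxδ (by linarith)
    linarith [Real.rpow_pos_of_pos hx₀ (1 / 4 + δ)]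
  · exact const_mul_sq_lt_of_le_rpow hx hxδ (by positivity) hB_le (by linarith)
  · rw [Real.rpow_neg hx₀.le, ← div_eq_mul_inv, le_div_iff₀ (Real.rpow_pos_of_pos hx₀ _), mul_assoc]
    refine mul_le_of_sq_le han ?_
    calc (⌊y⌋₊ * x ^ (2 * δ)) ^ 2 ≤ (y * x ^ (2 * δ)) ^ 2 := by gcongr
      _ = x ^ (1 / 2 + 8 * δ) := by
          rw [hy, ← Real.rpow_add hx₀, rpow_sq hx₀.le]
          ring_nf
      _ ≤ n := hn.le

end BlockLengths

section HyperbolaSumBound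

variable {p : ℕ} [Fact p.Prime] {χ : MulChar (ZMod p) ℂ} {δ κ C : ℝ} {N M A : ℕ}

theorem hyperbolaSum_le_of_le (hshort : HasShortSumBound χ δ κ C) (hδ : 0 < δ)
    (hpδ : 100 ≤ (p : ℝ) ^ δ) (hκ : 0 ≤ κ) (hκδ : κ ≤ 2 * δ) (hC : 1 ≤ C)
    (hN : (p : ℝ) ^ (1 / 4 + 64 * δ) ≤ N) (hN' : N ≤ (p : ℝ) ^ (1 / 2 + 8 * δ))
    (hM : ⌊(p : ℝ) ^ (1 / 8 : ℝ)⌋₊ ≤ M) (hA : 0 < A) (hAN : A ^ 2 ≤ N) :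
    hyperbolaSum χ N M A ≤ 6 * C * N * M * (p : ℝ) ^ (-κ) := by
  have hp : (1 : ℝ) ≤ p := by exact_mod_cast (Fact.out : p.Prime).one_le
  have hp₀ : (0 : ℝ) < p := by linarith
  obtain ⟨B, hB, hAB, hABp, hABN⟩ := exists_block_length_of_le (a := A) (n := N) hp hδ hpδ
    (by exact_mod_cast hA) (by exact_mod_cast hAN) hN hN'
  let L := ⌊(p : ℝ) ^ (1 / 8 : ℝ)⌋₊
  have hp₈ : 1 ≤ (p : ℝ) ^ (1 / 8 : ℝ) := Real.one_le_rpow hp (by norm_num)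
  have hL_le : (L : ℝ) ≤ (p : ℝ) ^ (1 / 8 : ℝ) := Nat.floor_le (by positivity)
  have hL_ge : (p : ℝ) ^ (1 / 8 : ℝ) / 2 < L := Nat.div_two_lt_floor hp₈
  have hLAB : (L : ℝ) ≤ A * B :=
    hL_le.trans ((Real.rpow_le_rpow_of_exponent_le hp (by linarith)).trans hAB)
  have hBδ : (p : ℝ) ^ δ ≤ B := (Real.rpow_le_rpow_of_exponent_le hp (by linarith)).trans hB
  have hBL : (p : ℝ) ^ (1 / 4 + δ) ≤ B * L := by
    calc (p : ℝ) ^ (1 / 4 + δ) ≤ (p : ℝ) ^ (1 / 4 + 2 * δ) / 2 := by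
          have h := mul_rpow_le_rpow (s := 1 / 4 + δ) (t := 1 / 4 + 2 * δ) hp hpδ (by linarith)
          linarith [Real.rpow_pos_of_pos hp₀ (1 / 4 + δ)]
      _ = (p : ℝ) ^ (1 / 8 + 2 * δ) * ((p : ℝ) ^ (1 / 8 : ℝ) / 2) := by
          rw [← mul_div_assoc, ← Real.rpow_add hp₀]
          ring_nf
      _ ≤ B * L := by gcongr
  refine hyperbolaSum_le_of_shortSum_le_mul χ hA ?_ (Nat.floor_pos.2 hp₈) hM hC (by positivity)
    (Real.rpow_le_one_of_one_le_of_nonpos hp (by linarith)) (hABN.trans ?_) fun b₀ v₀ ↦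
      hshort A B L b₀ v₀ (by exact_mod_cast hLAB) (by exact_mod_cast hABp) hBδ hAB hBL
  · exact_mod_cast (Real.rpow_pos_of_pos hp₀ _).trans_le hBδ
  · gcongr 1
    exact Real.rpow_le_rpow_of_exponent_le hp (by linarith)

theorem hyperbolaSum_le_of_gt (hshort : HasShortSumBound χ δ κ C) (hδ : 0 < δ)
    (hδ' : δ ≤ 1 / 10) (hpδ : 100 ≤ (p : ℝ) ^ δ) (hκ : 0 ≤ κ) (hκδ : κ ≤ 2 * δ) (hC : 1 ≤ C)
    (hN : (p : ℝ) ^ (1 / 2 + 8 * δ) < N) (hNp : N ≤ p) (hA : 0 < A)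
    (hAN : A ^ 2 ≤ N) :
    hyperbolaSum χ N M A ≤ 4 * C * N * M * (p : ℝ) ^ (-κ) := by
  have hp : (1 : ℝ) ≤ p := by exact_mod_cast (Fact.out : p.Prime).one_le
  have hp₀ : (0 : ℝ) < p := by linarith
  obtain ⟨B, hB, hBp, hABN⟩ := exists_block_length_of_gt (a := A) (n := N) hp hδ hδ' hpδ
    (by exact_mod_cast hAN) hN
  have hBδ : (p : ℝ) ^ δ ≤ B := (Real.rpow_le_rpow_of_exponent_le hp (by linarith)).trans hB
  have hB₀ : 0 < B := by exact_mod_cast (Real.rpow_pos_of_pos hp₀ _).trans_le hBδ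
  have hAp : 2 * A ≤ p := by
    have hp₁₀₀ : (100 : ℝ) ≤ p := by
      simpa using hpδ.trans (Real.rpow_le_rpow_of_exponent_le hp (by linarith : δ ≤ 1))
    have hp₁₀₀' : 100 ≤ p := by exact_mod_cast hp₁₀₀
    nlinarith
  refine hyperbolaSum_le_of_norm_sum_range_le_mul χ M hA hB₀ hAp hC (by positivity)
    (Real.rpow_le_one_of_one_le_of_nonpos hp (by linarith)) (hABN.trans ?_) fun c ↦ ?_
  · gcongr 1
    exact Real.rpow_le_rpow_of_exponent_le hp (by linarith)
  · have h := hshort 1 B 1 c 0 (by lia) (by rw [one_mul]; exact_mod_cast hBp) hBδ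
      (by simpa using hB) (by simpa using hB)
    simpa [shortSum] using h

theorem exists_hyperbolaSum_le {δ : ℝ} (hδ : 0 < δ) (hδ' : δ ≤ 1 / 10) :
    ∃ κ : ℝ, 0 < κ ∧ κ ≤ δ ∧ ∃ C : ℝ, 1 ≤ C ∧ ∀ (p : ℕ) [Fact p.Prime]
      (χ : MulChar (ZMod p) ℂ), χ ≠ 1 → 100 ≤ (p : ℝ) ^ δ → ∀ N M A : ℕ,
      (p : ℝ) ^ (1 / 4 + 64 * δ) ≤ N → N ≤ p → ⌊(p : ℝ) ^ (1 / 8 : ℝ)⌋₊ ≤ M →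
      0 < A → A ^ 2 ≤ N → hyperbolaSum χ N M A ≤ C * N * M * (p : ℝ) ^ (-κ) := by
  obtain ⟨κ, hκ, hκδ, C, hC, hshort⟩ := exists_hasShortSumBound hδ
  refine ⟨κ, hκ, hκδ, 6 * C, by linarith, fun p _ χ hχ hpδ N M A hN hNp hM hA hAN ↦ ?_⟩
  obtain hN' | hN' := le_or_gt (N : ℝ) ((p : ℝ) ^ (1 / 2 + 8 * δ))
  · exact hyperbolaSum_le_of_le (hshort p χ hχ) hδ hpδ hκ.le (by linarith) hC hN hN' hM hA hAN
  · refine (hyperbolaSum_le_of_gt (hshort p χ hχ) hδ hδ' hpδ hκ.le (by linarith) hC hN' hNp hA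
      hAN).trans ?_
    gcongr
    norm_num

end HyperbolaSumBound

section DivisorCharSum

variable {p : ℕ} {χ : MulChar (ZMod p) ℂ} {N M : ℕ}

/-- The bilinear sum of `χ (u - v)` over `1 ≤ u ≤ N` and `1 ≤ v ≤ M`, with the divisor function as
weight in both variables. -/
noncomputable def divisorCharSum (χ : MulChar (ZMod p) ℂ) (N M : ℕ) : ℂ :=
  ∑ u ∈ Icc 1 N, ∑ v ∈ Icc 1 M, (u.divisors.card : ℂ) * (v.divisors.card : ℂ) *
    χ (((u : ℤ) - (v : ℤ) : ℤ) : ZMod p)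

theorem divisorCharSum_eq (χ : MulChar (ZMod p) ℂ) (N M : ℕ) :
    divisorCharSum χ N M = ∑ v ∈ Icc 1 M,
      #v.divisors • ∑ u ∈ Icc 1 N, #u.divisors • χ ((u : ZMod p) - v) := by
  rw [divisorCharSum, sum_comm]
  refine sum_congr rfl fun v _ ↦ ?_
  rw [smul_sum]
  refine sum_congr rfl fun u _ ↦ ?_
  push_cast [nsmul_eq_mul]
  ring

theorem card_divisors_two_pow_log (s : ℕ) : #(2 ^ Nat.log 2 s).divisors = Nat.log 2 s + 1 := by
  rw [Nat.divisors_prime_pow Nat.prime_two, card_map, card_range]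

variable [Fact p.Prime]

theorem norm_divisorCharSum_le_sum {W : ℝ} (hW₀ : 0 ≤ W)
    (hW : ∀ v ≤ M, (#v.divisors : ℝ) ≤ W) :
    ‖divisorCharSum χ N M‖ ≤ W * (2 * ∑ a ∈ Icc 1 N.sqrt, ∑ v ∈ Icc 1 M,
      ‖∑ b ∈ Ioc a (N / a), χ (a * b - v)‖ + M * N.sqrt) := by
  have hinner (v : ℕ) : ‖∑ u ∈ Icc 1 N, #u.divisors • χ ((u : ZMod p) - v)‖ ≤
      2 * ∑ a ∈ Icc 1 N.sqrt, ‖∑ b ∈ Ioc a (N / a), χ (a * b - v)‖ + N.sqrt := by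
    simpa only [Nat.cast_mul] using norm_sum_card_divisors_nsmul_le
      (f := fun u : ℕ ↦ χ ((u : ZMod p) - v)) (fun _ ↦ norm_mulChar_le_one χ _) N
  rw [divisorCharSum_eq]
  calc ‖∑ v ∈ Icc 1 M, #v.divisors • ∑ u ∈ Icc 1 N, #u.divisors • χ ((u : ZMod p) - v)‖
      ≤ ∑ v ∈ Icc 1 M,
          W * (2 * ∑ a ∈ Icc 1 N.sqrt, ‖∑ b ∈ Ioc a (N / a), χ (a * b - v)‖ + N.sqrt) := by
        refine norm_sum_le_of_le _ fun v hv ↦ ?_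
        rw [nsmul_eq_mul, norm_mul, Complex.norm_natCast]
        exact mul_le_mul (hW v (mem_Icc.1 hv).2) (hinner v) (norm_nonneg _) hW₀
    _ = W * (2 * ∑ a ∈ Icc 1 N.sqrt, ∑ v ∈ Icc 1 M,
          ‖∑ b ∈ Ioc a (N / a), χ (a * b - v)‖ + M * N.sqrt) := by
        rw [← mul_sum, sum_add_distrib, ← mul_sum, sum_comm, sum_const, Nat.card_Icc,
          Nat.add_sub_cancel, nsmul_eq_mul]

theorem norm_divisorCharSum_le_of_hyperbolaSum_le {W R : ℝ} (hW₀ : 0 ≤ W)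
    (hW : ∀ n ≤ p, (#n.divisors : ℝ) ≤ W) (hN : N ≠ 0) (hNp : N ≤ p) (hMp : M ≤ p) (hR₀ : 0 ≤ R)
    (hR : ∀ A, 0 < A → A ^ 2 ≤ N → hyperbolaSum χ N M A ≤ R) :
    ‖divisorCharSum χ N M‖ ≤ W * (2 * (W * R) + M * N.sqrt) := by
  have hs : N.sqrt ≠ 0 := (Nat.sqrt_pos.2 (Nat.pos_of_ne_zero hN)).ne'
  have hlog : (Nat.log 2 N.sqrt + 1 : ℝ) ≤ W := by
    have h := hW (2 ^ Nat.log 2 N.sqrt)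
      ((Nat.pow_log_le_self 2 hs).trans ((Nat.sqrt_le_self N).trans hNp))
    rw [card_divisors_two_pow_log] at h
    exact_mod_cast h
  refine (norm_divisorCharSum_le_sum hW₀ fun v hv ↦ hW v (hv.trans hMp)).trans ?_
  gcongr
  refine (sum_Icc_le_log_mul (fun _ ↦ sum_nonneg fun _ _ ↦ norm_nonneg _)
    (fun A hA hAs ↦ hR A hA ?_) hs).trans (by gcongr)
  exact (Nat.pow_le_pow_left hAs 2).trans (Nat.sqrt_le' N)

theorem natCast_sqrt_le_mul_rpow_neg {x κ : ℝ} (hx : 0 < x) (hN : x ^ (2 * κ) ≤ N) :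
    (N.sqrt : ℝ) ≤ N * x ^ (-κ) := by
  rw [Real.rpow_neg hx.le, ← div_eq_mul_inv, le_div_iff₀ (Real.rpow_pos_of_pos hx _)]
  exact mul_le_of_sq_le (by exact_mod_cast Nat.sqrt_le' N) ((rpow_sq hx.le κ).trans_le hN)

theorem exists_norm_divisorCharSum_le {δ : ℝ} (hδ : 0 < δ) (hδ' : δ ≤ 1 / 10) :
    ∃ κ : ℝ, 0 < κ ∧ κ ≤ δ ∧ ∃ C : ℝ, 0 < C ∧ ∀ (p : ℕ) [Fact p.Prime]
      (χ : MulChar (ZMod p) ℂ), χ ≠ 1 → 100 ≤ (p : ℝ) ^ δ → ∀ N M : ℕ,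
      (p : ℝ) ^ (1 / 4 + 64 * δ) ≤ N → N ≤ p → ⌊(p : ℝ) ^ (1 / 8 : ℝ)⌋₊ ≤ M → M ≤ p →
      ‖divisorCharSum χ N M‖ ≤ C * N * M * (p : ℝ) ^ (-κ) := by
  obtain ⟨κ, hκ, hκδ, C, hC, hhyp⟩ := exists_hyperbolaSum_le hδ hδ'
  obtain ⟨D, hD, hdiv⟩ := exists_card_divisors_le_mul_rpow (ε := κ / 4) (by positivity)
  refine ⟨κ / 2, by positivity, by linarith, 3 * D ^ 2 * C, by positivity, ?_⟩
  intro p _ χ hχ hpδ N M hN hNp hM hMp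
  have hp : (1 : ℝ) ≤ p := by exact_mod_cast (Fact.out : p.Prime).one_le
  have hp₀ : (0 : ℝ) < p := by linarith
  have hN₀ : N ≠ 0 := by
    rintro rfl
    exact (Real.rpow_pos_of_pos hp₀ _).not_ge (hN.trans_eq Nat.cast_zero)
  set W := D * (p : ℝ) ^ (κ / 4) with hW
  set R := C * N * M * (p : ℝ) ^ (-κ)
  have hW₁ : 1 ≤ W := one_le_mul_of_one_le_of_one_le hD (Real.one_le_rpow hp (by positivity))
  have hcard (n : ℕ) (hn : n ≤ p) : (#n.divisors : ℝ) ≤ W :=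
    (hdiv n).trans (by rw [hW]; gcongr)
  have hdiag : M * N.sqrt ≤ W * R := by
    have hsqrt : (N.sqrt : ℝ) ≤ N * (p : ℝ) ^ (-κ) := natCast_sqrt_le_mul_rpow_neg hp₀
      ((Real.rpow_le_rpow_of_exponent_le hp (by linarith)).trans hN)
    calc (M * N.sqrt : ℝ) ≤ 1 * (1 * (M * (N * (p : ℝ) ^ (-κ)))) := by
          rw [one_mul, one_mul]
          gcongr
      _ ≤ W * (C * (M * (N * (p : ℝ) ^ (-κ)))) := by gcongr
      _ = W * R := by ring
  have hWp : W ^ 2 * (p : ℝ) ^ (-κ) = D ^ 2 * (p : ℝ) ^ (-(κ / 2)) := by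
    rw [hW, mul_pow, rpow_sq hp₀.le, mul_assoc, ← Real.rpow_add hp₀]
    ring_nf
  calc ‖divisorCharSum χ N M‖ ≤ W * (2 * (W * R) + M * N.sqrt) :=
        norm_divisorCharSum_le_of_hyperbolaSum_le (by positivity) hcard hN₀ hNp hMp (by positivity)
          fun A hA hAN ↦ hhyp p χ hχ hpδ N M A hN hNp hM hA hAN
    _ ≤ W * (2 * (W * R) + W * R) := by gcongr
    _ = 3 * C * N * M * (W ^ 2 * (p : ℝ) ^ (-κ)) := by ring
    _ = 3 * D ^ 2 * C * N * M * (p : ℝ) ^ (-(κ / 2)) := by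
        rw [hWp]
        ring

theorem norm_divisorCharSum_le_sq (χ : MulChar (ZMod p) ℂ) (N M : ℕ) :
    ‖divisorCharSum χ N M‖ ≤ ((N : ℝ) * M) ^ 2 := by
  have hterm (u v : ℕ) (hu : u ∈ Icc 1 N) (hv : v ∈ Icc 1 M) :
      ‖(#u.divisors : ℂ) * (#v.divisors : ℂ) * χ (((u : ℤ) - (v : ℤ) : ℤ) : ZMod p)‖ ≤
        (N : ℝ) * M := by
    rw [norm_mul, norm_mul, Complex.norm_natCast, Complex.norm_natCast]
    refine (mul_le_of_le_one_right (by positivity) (norm_mulChar_le_one χ _)).trans ?_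
    gcongr
    · exact (Nat.card_divisors_le_self u).trans (mem_Icc.1 hu).2
    · exact (Nat.card_divisors_le_self v).trans (mem_Icc.1 hv).2
  calc ‖divisorCharSum χ N M‖ ≤ ∑ _u ∈ Icc 1 N, ∑ _v ∈ Icc 1 M, (N : ℝ) * M :=
        norm_sum_le_of_le _ fun u hu ↦ norm_sum_le_of_le _ fun v hv ↦ hterm u v hu hv
    _ = ((N : ℝ) * M) ^ 2 := by
        simp only [sum_const, Nat.card_Icc, Nat.add_sub_cancel, nsmul_eq_mul]
        ring

theorem norm_divisorCharSum_le_of_rpow_le {δ κ c : ℝ} (hδ : 0 < δ) (hκ : κ ≤ 1)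
    (hpδ : (p : ℝ) ^ δ ≤ c) (hNp : N ≤ p) (hMp : M ≤ p) :
    ‖divisorCharSum χ N M‖ ≤ c ^ (3 / δ) * N * M * (p : ℝ) ^ (-κ) := by
  have hp : (1 : ℝ) ≤ p := by exact_mod_cast (Fact.out : p.Prime).one_le
  have hp₀ : (0 : ℝ) < p := by linarith
  calc ‖divisorCharSum χ N M‖ ≤ ((N : ℝ) * M) ^ 2 := norm_divisorCharSum_le_sq χ N M
    _ ≤ (p : ℝ) * p * (N * M) := by
        rw [sq]
        gcongr
    _ = (p : ℝ) ^ (2 + κ) * N * M * (p : ℝ) ^ (-κ) := by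
        rw [Real.rpow_add hp₀, Real.rpow_neg hp₀.le, Real.rpow_two]
        field_simp
    _ ≤ (p : ℝ) ^ (δ * (3 / δ)) * N * M * (p : ℝ) ^ (-κ) := by
        gcongr
        rw [mul_div_cancel₀ _ hδ.ne']
        linarith
    _ ≤ c ^ (3 / δ) * N * M * (p : ℝ) ^ (-κ) := by
        rw [Real.rpow_mul hp₀.le]
        gcongr

end DivisorCharSum

theorem divisor_character_sum_general (η : ℝ) (hη : 0 < η) :
    ∃ κ : ℝ, 0 < κ ∧ ∃ C : ℝ, 0 < C ∧ ∀ (p : ℕ), p.Prime →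
      ∀ (χ : MulChar (ZMod p) ℂ), χ ≠ 1 →
      ∀ (U V : ℝ), (p : ℝ) ^ ((1 : ℝ) / 4 + η) ≤ U → U ≤ (p : ℝ) →
        (p : ℝ) ^ ((1 : ℝ) / 8) ≤ V → V ≤ (p : ℝ) →
      ‖∑ u ∈ Icc 1 ⌊U⌋₊, ∑ v ∈ Icc 1 ⌊V⌋₊,
          (u.divisors.card : ℂ) * (v.divisors.card : ℂ) *
            χ (((u : ℤ) - (v : ℤ) : ℤ) : ZMod p)‖ ≤ C * U * V * (p : ℝ) ^ (-κ) := by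
  obtain ⟨δ, hδ, hδ', hδη⟩ : ∃ δ : ℝ, 0 < δ ∧ δ ≤ 1 / 10 ∧ 65 * δ ≤ η :=
    ⟨min η 1 / 65, by positivity, by linarith [min_le_right η 1], by linarith [min_le_left η 1]⟩
  obtain ⟨κ, hκ, hκδ, C, hC, hlarge⟩ := exists_norm_divisorCharSum_le hδ hδ'
  refine ⟨κ, hκ, C + 100 ^ (3 / δ), by positivity, ?_⟩
  intro p hprime χ hχ U V hU hUp hV hVp
  have : Fact p.Prime := ⟨hprime⟩
  have hp : (1 : ℝ) ≤ p := by exact_mod_cast hprime.one_le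
  have hU₁ : 1 ≤ U := (Real.one_le_rpow hp (by positivity)).trans hU
  have hV₀ : 0 ≤ V := (Real.rpow_nonneg p.cast_nonneg _).trans hV
  have hNp : ⌊U⌋₊ ≤ p := Nat.floor_le_of_le hUp
  have hMp : ⌊V⌋₊ ≤ p := Nat.floor_le_of_le hVp
  have hNU : (⌊U⌋₊ : ℝ) ≤ U := Nat.floor_le (by linarith)
  have hMV : (⌊V⌋₊ : ℝ) ≤ V := Nat.floor_le hV₀
  suffices ‖divisorCharSum χ ⌊U⌋₊ ⌊V⌋₊‖ ≤
      (C + 100 ^ (3 / δ)) * ⌊U⌋₊ * ⌊V⌋₊ * (p : ℝ) ^ (-κ) from this.trans (by gcongr)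
  obtain hpδ | hpδ := le_total 100 ((p : ℝ) ^ δ)
  · have hN : (p : ℝ) ^ (1 / 4 + 64 * δ) ≤ ⌊U⌋₊ := by
      have h := mul_rpow_le_rpow (s := 1 / 4 + 64 * δ) (t := 1 / 4 + η) hp hpδ (by linarith)
      linarith [Nat.div_two_lt_floor hU₁, Real.rpow_nonneg p.cast_nonneg (1 / 4 + 64 * δ)]
    refine (hlarge p χ hχ hpδ _ _ hN hNp (Nat.floor_mono hV) hMp).trans ?_
    gcongr
    exact le_add_of_nonneg_right (by positivity)
  · refine (norm_divisorCharSum_le_of_rpow_le (κ := κ) hδ (by linarith) hpδ hNp hMp).trans ?_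
    gcongr
    exact le_add_of_nonneg_left hC.le

/-- Corollary 2.14 (bilinear character sums with divisor function weights). -/
theorem divisor_character_sum (η : ℝ) (hη : 0 < η) :
    ∃ κ : ℝ, 0 < κ ∧ ∃ C : ℝ, 0 < C ∧ ∀ (p : ℕ), p.Prime →
      ∀ (χ : MulChar (ZMod p) ℂ), χ ≠ 1 →
      ∀ (U V : ℝ), (p : ℝ) ^ ((1 : ℝ) / 4 + η) < U → U ≤ (p : ℝ) →
        (p : ℝ) ^ ((1 : ℝ) / 4 + η) < V → V ≤ (p : ℝ) →
      ‖∑ u ∈ Icc 1 ⌊U⌋₊, ∑ v ∈ Icc 1 ⌊V⌋₊,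
          (u.divisors.card : ℂ) * (v.divisors.card : ℂ) *
            χ (((u : ℤ) - (v : ℤ) : ℤ) : ZMod p)‖ ≤ C * U * V * (p : ℝ) ^ (-κ) := by
  obtain ⟨κ, hκ, C, hC, h⟩ := divisor_character_sum_general η hη
  refine ⟨κ, hκ, C, hC, fun p hp χ hχ U V hU hUp hV hVp ↦ h p hp χ hχ U V hU.le hUp ?_ hVp⟩
  have hp₁ : (1 : ℝ) ≤ p := by exact_mod_cast hp.one_le
  exact (Real.rpow_le_rpow_of_exponent_le hp₁ (by linarith)).trans hV.le
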